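/- arXiv:1708.07761 — 2 statements merged into one kernel-verified Lean document; each statement's English description precedes it below -/
import Mathlib

section
/- Each face boundary move (M2), replacing a disk A² of squares in the boundary of a 3-cube F³ by the complementary disk B² = Cl(∂F³ \ A²), extends to an ambient isotopy of ℝ⁴; in particular a cubical 2-knot and its image under an M2-move are ambient isotopic. -/
open scoped Classical

/-- A `k`-dimensional face of the cubulation of `ℝⁿ` at scale `1/m`:
free coordinates in `S`, the rest fixed at lattice values `v i / m`. -/
def sFace (n m : ℕ) (v : Fin n → ℤ) (S : Finset (Fin n)) : Set (Fin n → ℝ) :=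
  {x | ∀ i, (i ∈ S → (v i : ℝ) / m ≤ x i ∧ x i ≤ ((v i : ℝ) + 1) / m) ∧
        (i ∉ S → x i = (v i : ℝ) / m)}

/-- The collection of all `k`-faces of the cubulation of `ℝⁿ` at scale `1/m`. -/
def sFaces (n m k : ℕ) : Set (Set (Fin n → ℝ)) :=
  {F | ∃ (v : Fin n → ℤ) (S : Finset (Fin n)), S.card = k ∧ F = sFace n m v S}

/-- The `k`-skeleton of the cubulation of `ℝⁿ` at scale `1/m`. -/
def skeleton (n m k : ℕ) : Set (Fin n → ℝ) := ⋃₀ sFaces n m k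


/-- The closed unit 2-disk. -/
def Disk2 : Set (EuclideanSpace ℝ (Fin 2)) := Metric.closedBall 0 1

/-- The standard 2-sphere. -/
def Sphere2 : Set (EuclideanSpace ℝ (Fin 3)) := Metric.sphere 0 1

/-- A cubical 2-knot: an embedded 2-sphere contained in the 2-skeleton (scaffolding)
of some subdivision of the canonical cubulation of ℝ⁴. -/
def IsCubical2Knot (K : Set (Fin 4 → ℝ)) : Prop :=
  Nonempty (↥K ≃ₜ ↥Sphere2) ∧ ∃ m : ℕ, 0 < m ∧ K ⊆ skeleton 4 m 2

/-- Ambient isotopy in ℝ⁴: a continuous family of homeomorphisms of ℝ⁴ starting at the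
identity and carrying `K₁` onto `K₂`. -/
def AmbientIsotopic (K₁ K₂ : Set (Fin 4 → ℝ)) : Prop :=
  ∃ H : ℝ → ((Fin 4 → ℝ) ≃ₜ (Fin 4 → ℝ)),
    Continuous (fun q : ℝ × (Fin 4 → ℝ) => H q.1 q.2) ∧
    H 0 = Homeomorph.refl (Fin 4 → ℝ) ∧
    (H 1) '' K₁ = K₂

/-- A face boundary move (M2) at scale `1/m`, in the 3-cube `F` of the cubulation:
a connected disk `A = ⋃₀ 𝒜` of at most three squares of `∂F`, equal to `K ∩ F`,
is replaced by the complementary disk `B` in `∂F`. -/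
def M2MoveAt (m : ℕ) (F : Set (Fin 4 → ℝ)) (K K' : Set (Fin 4 → ℝ)) : Prop :=
  ∃ 𝒜 : Set (Set (Fin 4 → ℝ)),
    𝒜 ⊆ {G ∈ sFaces 4 m 2 | G ⊆ F} ∧ 𝒜.Nonempty ∧ 𝒜.ncard ≤ 3 ∧
    K ∩ F = ⋃₀ 𝒜 ∧
    Nonempty (↥(⋃₀ 𝒜) ≃ₜ ↥Disk2) ∧
    K' = (K \ ⋃₀ 𝒜) ∪ ⋃₀ ({G ∈ sFaces 4 m 2 | G ⊆ F} \ 𝒜)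

/-- A face boundary move (M2) performed in some 3-cube of some subdivision (M1-moves
being subsumed by the choice of the subdivision scale `m`). -/
def M2Move (K K' : Set (Fin 4 → ℝ)) : Prop :=
  ∃ m : ℕ, 0 < m ∧ ∃ F ∈ sFaces 4 m 3, M2MoveAt m F K K'

/-- Equivalence by a finite sequence of cubulated moves (M1 and M2). -/
def CubulatedEquiv (K₁ K₂ : Set (Fin 4 → ℝ)) : Prop :=
  Relation.ReflTransGen (fun K K' => M2Move K K' ∨ M2Move K' K) K₁ K₂


/-- The loop `γ` (periodic of period `2π`) has a periodic continuous logarithm. -/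
def PerLog (γ : ℝ → ℂ) : Prop :=
  ∃ l : ℝ → ℂ, Continuous l ∧ (∀ θ, Complex.exp (l θ) = γ θ) ∧ ∀ θ, l (θ + 2 * Real.pi) = l θ

lemma const_of_exp_eq_one {X : Type*} [TopologicalSpace X] [PreconnectedSpace X] (g : X → ℂ)
    (hg : Continuous g) (h : ∀ x, Complex.exp (g x) = 1) (x y : X) : g x = g y := by
  apply Complex.isCoveringMap_exp.const_of_comp hg
  intro a b
  simp [h]

lemma perLog_homotopy (H : ℝ → ℝ → ℂ) (hc : Continuous fun p : ℝ × ℝ => H p.1 p.2)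
    (h0 : ∀ s θ, H s θ ≠ 0) (hp : ∀ s θ, H s (θ + 2 * Real.pi) = H s θ)
    (hW : PerLog (H 0)) : PerLog (H 1) := by
  obtain ⟨l, hl, hle, hlp⟩ := hW
  obtain ⟨F, ⟨-, hF⟩, -⟩ := Complex.isCoveringMapOn_exp.existsUnique_continuousMap_lifts
    (A := ℝ × ℝ) ⟨fun p : ℝ × ℝ => H p.1 p.2, hc⟩ (a₀ := (0, 0)) (Complex.exp_log (h0 0 0))
    (fun p => h0 _ _)
  have hF' : ∀ s θ, Complex.exp (F (s, θ)) = H s θ := fun s θ => congrFun hF (s, θ)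
  have hFc : Continuous F := F.continuous
  have c1 := const_of_exp_eq_one (fun p : ℝ × ℝ => F (p.1, p.2 + 2 * Real.pi) - F (p.1, p.2))
    (by fun_prop) (by
      rintro ⟨s, θ⟩
      simp only [Complex.exp_sub, hF', hp]
      exact div_self (h0 _ _))
  have c2 := const_of_exp_eq_one (fun θ : ℝ => F (0, θ) - l θ)
    (by fun_prop) (by
      intro θ
      simp only [Complex.exp_sub, hF', hle]
      exact div_self (h0 _ _))
  refine ⟨fun θ => F (1, θ), by fun_prop, fun θ => hF' _ _, fun θ => ?_⟩
  have e1 := c1 (1, θ) (0, 0)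
  have e2 := c2 (0 + 2 * Real.pi) 0
  simp only [hlp] at e1 e2
  linear_combination e1 + e2

lemma perLog_odd (γ : ℝ → ℂ) (hodd : ∀ θ, γ (θ + Real.pi) = - γ θ) (h : PerLog γ) : False := by
  obtain ⟨l, hl, hle, hlp⟩ := h
  have hE : ∀ θ, Complex.exp (l (θ + Real.pi) - l θ - Real.pi * Complex.I) = 1 := by
    intro θ
    have hne : γ θ ≠ 0 := by rw [← hle]; exact Complex.exp_ne_zero _
    simp only [Complex.exp_sub, hle, hodd, Complex.exp_pi_mul_I]
    field_simp
  have c := const_of_exp_eq_one _ (by fun_prop) hE Real.pi 0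
  obtain ⟨n, hn⟩ := Complex.exp_eq_one_iff.1 (hE 0)
  have e := hlp 0
  have e3 : Real.pi + Real.pi = 0 + 2 * Real.pi := by ring
  simp only [e3, e] at c
  rw [zero_add] at c hn
  have hpi : (Real.pi : ℂ) * Complex.I ≠ 0 := by simp [Real.pi_ne_zero]
  have : (Real.pi : ℂ) * Complex.I * (2 * n + 1) = 0 := by linear_combination - hn - (1/2) * c
  rcases mul_eq_zero.1 this with h | h
  · exact hpi h
  · have : (2 * n + 1 : ℤ) = 0 := by exact_mod_cast h
    omega

/-- Invariance of domain in dimension two. -/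
lemma inv_domain_complex (f : ℂ → ℂ) (hf : ContinuousOn f (Metric.closedBall 0 1))
    (hi : Set.InjOn f (Metric.closedBall 0 1)) :
    f 0 ∈ interior (f '' Metric.closedBall 0 1) := by
  by_contra hcon
  have hsub : Metric.sphere (0 : ℂ) 1 ⊆ Metric.closedBall 0 1 := Metric.sphere_subset_closedBall
  have hcl : IsClosed (f '' Metric.sphere (0 : ℂ) 1) :=
    ((isCompact_sphere _ _).image_of_continuousOn (hf.mono hsub)).isClosed
  have hn : f 0 ∈ (f '' Metric.sphere (0 : ℂ) 1)ᶜ := by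
    rintro ⟨z, hz, hze⟩
    have := hi (hsub hz) (by simp) hze
    subst this
    simp at hz
  obtain ⟨ε, hε, hball⟩ := Metric.isOpen_iff.1 hcl.isOpen_compl _ hn
  obtain ⟨c, hcb, hcn⟩ : ∃ c ∈ Metric.ball (f 0) ε, c ∉ f '' Metric.closedBall 0 1 := by
    by_contra! hh
    exact hcon (mem_interior.2 ⟨_, hh, Metric.isOpen_ball, Metric.mem_ball_self hε⟩)
  let k : ℝ → ℝ := fun s => max 0 (min s 1)
  have hkc : Continuous k := by fun_prop
  have hk0 : ∀ s, 0 ≤ k s := fun s => le_max_left _ _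
  have hk1 : ∀ s, k s ≤ 1 := fun s => max_le zero_le_one (min_le_right _ _)
  have k0 : k 0 = 0 := by simp [k]
  have k1 : k 1 = 1 := by simp [k]
  let e : ℝ → ℂ := fun θ => Complex.exp (θ * Complex.I)
  have hec : Continuous e := by fun_prop
  have hen : ∀ θ, ‖e θ‖ = 1 := fun θ => Complex.norm_exp_ofReal_mul_I θ
  have hep : ∀ θ, e (θ + 2 * Real.pi) = e θ := by
    intro θ; simp only [e]; push_cast; rw [add_mul, Complex.exp_add, Complex.exp_two_pi_mul_I, mul_one]
  have heo : ∀ θ, e (θ + Real.pi) = - e θ := by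
    intro θ; simp only [e]; push_cast; rw [add_mul, Complex.exp_add, Complex.exp_pi_mul_I]; ring
  have hes : ∀ θ, e θ ∈ Metric.sphere (0 : ℂ) 1 := fun θ => by simp [hen]
  have heb : ∀ s θ, (k s : ℂ) * e θ ∈ Metric.closedBall (0 : ℂ) 1 := fun s θ => by
    simp only [mem_closedBall_zero_iff, norm_mul, hen, Complex.norm_real, mul_one, Real.norm_eq_abs,
      abs_of_nonneg (hk0 s), hk1 s]
  have heb' : ∀ s θ, -((k s : ℂ) * e θ) ∈ Metric.closedBall (0 : ℂ) 1 := fun s θ => by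
    have := heb s θ
    simpa using this
  have hfe : Continuous fun p : ℝ × ℝ => f (e p.2) :=
    hf.comp_continuous (by fun_prop) (fun p => hsub (hes _))
  have w1 : PerLog (fun θ => f (e θ) - c) := by
    have := perLog_homotopy (fun s θ => f (k s * e θ) - c)
      ((hf.comp_continuous (by fun_prop) (fun p => heb _ _)).sub continuous_const)
      (fun s θ h => hcn ⟨_, heb s θ, sub_eq_zero.1 h⟩) (fun s θ => by simp only [hep]) ?_
    · simpa [k1] using this
    · refine ⟨fun _ => Complex.log (f 0 - c), continuous_const, fun θ => ?_, fun θ => rfl⟩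
      rw [Complex.exp_log]
      · simp [k0]
      · intro h
        exact hcn ⟨0, by simp, sub_eq_zero.1 h⟩
  have w2 : PerLog (fun θ => f (e θ) - f 0) := by
    have := perLog_homotopy (fun s θ => f (e θ) - (c + k s * (f 0 - c)))
      (hfe.sub (by fun_prop))
      (fun s θ h => ?_) (fun s θ => by simp only [hep]) (by simpa [k0] using w1)
    · simpa [k1] using this
    · refine hball ?_ ⟨e θ, hes θ, sub_eq_zero.1 h⟩
      have : (c + k s * (f 0 - c)) - f 0 = ((1 - k s : ℝ) : ℂ) * (c - f 0) := by push_cast; ring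
      rw [mem_ball_iff_norm, this, norm_mul, Complex.norm_real, Real.norm_eq_abs,
        abs_of_nonneg (by linarith [hk1 s])]
      rw [mem_ball_iff_norm] at hcb
      nlinarith [hk0 s, hk1 s, norm_nonneg (c - f 0)]
  have w3 : PerLog (fun θ => f (e θ) - f (- e θ)) := by
    have := perLog_homotopy (fun s θ => f (e θ) - f (-(k s * e θ)))
      (hfe.sub (hf.comp_continuous (by fun_prop) (fun p => heb' _ _)))
      (fun s θ h => ?_) (fun s θ => by simp only [hep]) (by simpa [k0] using w2)
    · simpa [k1] using this
    · have h2 := hi (hsub (hes θ)) (heb' s θ) (sub_eq_zero.1 h)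
      have h3 : e θ * ((1 + k s : ℝ) : ℂ) = 0 := by push_cast; linear_combination h2
      rcases mul_eq_zero.1 h3 with h4 | h4
      · have := hen θ
        rw [h4] at this; simp at this
      · have : 1 + k s = 0 := by exact_mod_cast h4
        linarith [hk0 s]
  refine perLog_odd _ (fun θ => ?_) w3
  simp [heo]

lemma inv_domain_manifold {M : Type*} [TopologicalSpace M]
    [ChartedSpace (EuclideanSpace ℝ (Fin 2)) M] (g : ℝ × ℝ → M) (U : Set (ℝ × ℝ)) (hU : IsOpen U)
    (hg : ContinuousOn g U) (hi : Set.InjOn g U) (x : ℝ × ℝ) (hx : x ∈ U) :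
    g x ∈ interior (g '' U) := by
  let ch := chartAt (EuclideanSpace ℝ (Fin 2)) (g x)
  have hV : IsOpen (U ∩ g ⁻¹' ch.source) := hg.isOpen_inter_preimage hU ch.open_source
  obtain ⟨r, hr, hball⟩ := Metric.nhds_basis_closedBall.mem_iff.1
    (hV.mem_nhds ⟨hx, mem_chart_source _ _⟩)
  let T : EuclideanSpace ℝ (Fin 2) ≃L[ℝ] ℂ := ContinuousLinearEquiv.ofFinrankEq (by simp)
  let q : ℂ → ℝ × ℝ := fun z => x + r • (z.re, z.im)
  have hq : Continuous q := by fun_prop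
  have hqb : ∀ z ∈ Metric.closedBall (0 : ℂ) 1, q z ∈ U ∩ g ⁻¹' ch.source := by
    intro z hz
    apply hball
    rw [mem_closedBall_iff_norm]
    simp only [q, add_sub_cancel_left, norm_smul, Real.norm_eq_abs, abs_of_pos hr]
    have h1 : ‖((z.re, z.im) : ℝ × ℝ)‖ ≤ 1 := by
      rw [mem_closedBall_zero_iff] at hz
      exact max_le ((Complex.abs_re_le_norm z).trans hz) ((Complex.abs_im_le_norm z).trans hz)
    nlinarith
  have hqi : Function.Injective q := by
    intro z w h
    have h2 := add_left_cancel h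
    have h3 := smul_right_injective (ℝ × ℝ) hr.ne' h2
    simp only [Prod.mk.injEq] at h3
    exact Complex.ext h3.1 h3.2
  have key := inv_domain_complex (fun z => T (ch (g (q z))))
    (T.continuous.comp_continuousOn (ch.continuousOn.comp
      (hg.comp hq.continuousOn (fun z hz => (hqb z hz).1)) (fun z hz => (hqb z hz).2)))
    (fun z hz w hw h => hqi (hi (hqb z hz).1 (hqb w hw).1
      (ch.injOn (hqb z hz).2 (hqb w hw).2 (T.injective h))))
  obtain ⟨N, hN, hNo, hN0⟩ := mem_interior.1 key
  refine mem_interior.2 ⟨ch.source ∩ ch ⁻¹' (T ⁻¹' N), ?_,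
    ch.isOpen_inter_preimage (hNo.preimage T.continuous), mem_chart_source _ _, ?_⟩
  · rintro y ⟨hy, hyN⟩
    obtain ⟨z, hz, hze⟩ := hN hyN
    have := ch.injOn (hqb z hz).2 hy (T.injective hze)
    exact ⟨q z, (hqb z hz).1, this⟩
  · have : q 0 = x := by simp [q]
    simpa [this] using hN0

lemma fiber_homeo {X : Type*} [TopologicalSpace X] (f : X × ℝ × ℝ → ℝ) (hf : Continuous f)
    (hm : ∀ x w, StrictMono fun z => f (x, z, w))
    (hs : ∀ x w, Function.Surjective fun z => f (x, z, w)) :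
    ∃ h : (X × ℝ × ℝ) ≃ₜ (X × ℝ × ℝ), ∀ p, h p = (p.1, f p, p.2.2) := by
  choose g hg using hs
  have hg' : ∀ x w u, f (x, g x w u, w) = u := hg
  have hgf : ∀ x z w, g x w (f (x, z, w)) = z := fun x z w => (hm x w).injective (hg' _ _ _)
  have hgc : Continuous fun p : X × ℝ × ℝ => g p.1 p.2.2 p.2.1 := by
    rw [continuous_iff_continuousAt]
    rintro ⟨x, u, w⟩
    have hlt : ∀ z x' u' w', z < g x' w' u' ↔ f (x', z, w') < u' := by
      intro z x' u' w'
      conv_rhs => rw [← hg' x' w' u']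
      exact ((hm x' w').lt_iff_lt).symm
    have hgt : ∀ z x' u' w', g x' w' u' < z ↔ u' < f (x', z, w') := by
      intro z x' u' w'
      conv_rhs => rw [← hg' x' w' u']
      exact ((hm x' w').lt_iff_lt).symm
    refine tendsto_order.2 ⟨fun z hz => ?_, fun z hz => ?_⟩
    · simp only [hlt] at hz ⊢
      exact (isOpen_lt (f := fun p : X × ℝ × ℝ => f (p.1, z, p.2.2)) (g := fun p => p.2.1)
        (by fun_prop) (by fun_prop)).mem_nhds hz
    · simp only [hgt] at hz ⊢
      exact (isOpen_lt (f := fun p : X × ℝ × ℝ => p.2.1) (g := fun p => f (p.1, z, p.2.2))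
        (by fun_prop) (by fun_prop)).mem_nhds hz
  exact ⟨{ toFun := fun p => (p.1, f p, p.2.2)
           invFun := fun p => (p.1, g p.1 p.2.2 p.2.1, p.2.2)
           left_inv := by rintro ⟨x, z, w⟩; simp [hgf]
           right_inv := by rintro ⟨x, z, w⟩; simp [hg']
           continuous_toFun := by fun_prop
           continuous_invFun := continuous_fst.prodMk (hgc.prodMk continuous_snd.snd) }, fun p => rfl⟩

/-- The bump function (in the vertical and extra coordinates) used to push along the fibres. -/
noncomputable def bump (a b r z w : ℝ) : ℝ :=
  max 0 (1 - |w| / r) * max 0 (min ((z - a + r) / r) ((b + r - z) / (b + r - a)))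

lemma bump_nonneg (a b r z w : ℝ) : 0 ≤ bump a b r z w :=
  mul_nonneg (le_max_left _ _) (le_max_left _ _)

lemma bump_le_one {a b r : ℝ} (z w : ℝ) (hab : a < b) (hr : 0 < r) : bump a b r z w ≤ 1 := by
  have h1 : max 0 (1 - |w| / r) ≤ 1 :=
    max_le zero_le_one (by have : 0 ≤ |w| / r := by positivity
                           linarith)
  have h2 : max 0 (min ((z - a + r) / r) ((b + r - z) / (b + r - a))) ≤ 1 := by
    refine max_le zero_le_one ?_
    rcases le_total z a with h | h
    · exact (min_le_left _ _).trans ((div_le_one hr).2 (by linarith))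
    · exact (min_le_right _ _).trans ((div_le_one (by linarith)).2 (by linarith))
  unfold bump
  exact mul_le_one₀ h1 (le_max_left _ _) h2

lemma bump_lip {a b r : ℝ} (z z' w : ℝ) (hab : a < b) (hr : 0 < r) (hz : z < z') :
    bump a b r z w - (z' - z) / (b + r - a) ≤ bump a b r z' w := by
  have hpos : 0 < b + r - a := by linarith
  have hδ : 0 ≤ (z' - z) / (b + r - a) := div_nonneg (by linarith) hpos.le
  have hB : (b + r - z') / (b + r - a) = (b + r - z) / (b + r - a) - (z' - z) / (b + r - a) := by
    ring
  have hA : (z - a + r) / r ≤ (z' - a + r) / r := by gcongr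
  have h1 : max 0 (1 - |w| / r) ≤ 1 :=
    max_le zero_le_one (by have : 0 ≤ |w| / r := by positivity
                           linarith)
  have h0 : 0 ≤ max 0 (1 - |w| / r) := le_max_left _ _
  have h2 : max 0 (min ((z - a + r) / r) ((b + r - z) / (b + r - a))) - (z' - z) / (b + r - a)
      ≤ max 0 (min ((z' - a + r) / r) ((b + r - z') / (b + r - a))) := by
    rw [hB, sub_le_iff_le_add]
    refine max_le ?_ ?_
    · have := le_max_left 0 (min ((z' - a + r) / r)
        ((b + r - z) / (b + r - a) - (z' - z) / (b + r - a)))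
      linarith
    · rw [← sub_le_iff_le_add]
      refine le_trans ?_ (le_max_right _ _)
      refine le_min ?_ ?_
      · linarith [min_le_left ((z - a + r) / r) ((b + r - z) / (b + r - a))]
      · linarith [min_le_right ((z - a + r) / r) ((b + r - z) / (b + r - a))]
  unfold bump
  nlinarith

set_option maxHeartbeats 1000000 in
theorem push_isotopy (a b : ℝ × ℝ → ℝ) (ha : Continuous a) (hb : Continuous b)
    (C : Set ((ℝ × ℝ) × ℝ × ℝ)) (hC : IsClosed C)
    (hCF : ∀ x z, (x, z, (0 : ℝ)) ∈ C → a x < b x → a x ≤ z → z ≤ b x → False) :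
    ∃ H : ℝ → (((ℝ × ℝ) × ℝ × ℝ) ≃ₜ ((ℝ × ℝ) × ℝ × ℝ)),
      (Continuous fun q : ℝ × ((ℝ × ℝ) × ℝ × ℝ) => H q.1 q.2) ∧
      H 0 = Homeomorph.refl _ ∧ (∀ p ∈ C, H 1 p = p) ∧
      ∀ x, a x ≤ b x → H 1 (x, a x, 0) = (x, b x, 0) := by
  let C' : Set ((ℝ × ℝ) × ℝ × ℝ) := C ∪ {p | 1 ≤ |p.2.2|}
  have hC' : IsClosed C' := hC.union (isClosed_le continuous_const (by fun_prop))
  have hC'n : C'.Nonempty := ⟨(0, 0, 1), Or.inr (by simp)⟩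
  let G : ℝ × ℝ → ℝ → ℝ := fun x s => Metric.infDist (x, a x + s * (b x - a x), (0 : ℝ)) C'
  have hG : Continuous ↿G := by
    refine (Metric.continuous_infDist_pt C').comp ?_
    fun_prop
  let ρ : ℝ × ℝ → ℝ := fun x => sInf (G x '' Set.Icc 0 1)
  have hρ : Continuous ρ := IsCompact.continuous_sInf (f := G) isCompact_Icc hG
  have hρle : ∀ x s, s ∈ Set.Icc (0 : ℝ) 1 → ρ x ≤ G x s := by
    intro x s hs
    have hbdd : BddBelow (G x '' Set.Icc 0 1) := by
      refine ⟨0, ?_⟩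
      rintro _ ⟨s, -, rfl⟩
      exact Metric.infDist_nonneg
    exact csInf_le hbdd (Set.mem_image_of_mem (G x) hs)
  have hρpos : ∀ x, a x < b x → 0 < ρ x := by
    intro x hx
    have hGx : Continuous (G x) := (Metric.continuous_infDist_pt C').comp (by fun_prop)
    obtain ⟨s, hs, hse⟩ := (isCompact_Icc.image hGx).sInf_mem
      ((Set.nonempty_Icc.2 zero_le_one).image (G x))
    change 0 < sInf (G x '' Set.Icc 0 1)
    rw [← hse]
    refine (hC'.notMem_iff_infDist_pos hC'n).1 ?_
    rintro (h | h)
    · exact hCF _ _ h hx (by nlinarith [hs.1]) (by nlinarith [hs.2])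
    · norm_num at h
  have hbump0 : ∀ x z w, (x, z, w) ∈ C → a x < b x → bump (a x) (b x) (ρ x) z w = 0 := by
    intro x z w hp hx
    have hr := hρpos x hx
    have key : ρ x ≤ |w| ∨ z ≤ a x - ρ x ∨ b x + ρ x ≤ z := by
      by_contra! hh
      obtain ⟨h1, h2, h3⟩ := hh
      have main : ∀ s ∈ Set.Icc (0 : ℝ) 1, ρ x ≤ |a x + s * (b x - a x) - z| := by
        intro s hs
        have e1 := (hρle x s hs).trans (Metric.infDist_le_dist_of_mem (Or.inl hp : (x, z, w) ∈ C'))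
        have e2 : dist (x, a x + s * (b x - a x), (0 : ℝ)) (x, z, w) =
            max (dist x x) (max (dist (a x + s * (b x - a x)) z) (dist 0 w)) := rfl
        rw [e2, dist_self, Real.dist_eq, Real.dist_eq] at e1
        simp only [zero_sub, abs_neg] at e1
        rcases le_max_iff.1 e1 with h | h
        · linarith
        · rcases le_max_iff.1 h with h | h
          · exact h
          · linarith
      rcases lt_or_ge z (a x) with hz | hz
      · have := main 0 (by simp)
        rw [abs_of_nonneg (by linarith)] at this
        linarith
      rcases lt_or_ge (b x) z with hz' | hz'
      · have := main 1 (by simp)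
        rw [abs_of_nonpos (by linarith)] at this
        linarith
      · have hd : 0 < b x - a x := by linarith
        have := main ((z - a x) / (b x - a x))
          ⟨div_nonneg (by linarith) hd.le, (div_le_one hd).2 (by linarith)⟩
        rw [div_mul_cancel₀ _ hd.ne'] at this
        simp at this
        linarith
    unfold bump
    rcases key with h | h | h
    · rw [max_eq_left, zero_mul]
      have := (one_le_div hr).2 h
      linarith
    · rw [mul_eq_zero]; right
      apply max_eq_left
      exact (min_le_left _ _).trans (div_nonpos_of_nonpos_of_nonneg (by linarith) hr.le)
    · rw [mul_eq_zero]; right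
      apply max_eq_left
      exact (min_le_right _ _).trans
        (div_nonpos_of_nonpos_of_nonneg (by linarith) (by linarith))
  let k : ℝ → ℝ := fun s => max 0 (min s 1)
  have hkc : Continuous k := by fun_prop
  have hk0 : ∀ s, 0 ≤ k s := fun s => le_max_left _ _
  have hk1 : ∀ s, k s ≤ 1 := fun s => max_le zero_le_one (min_le_right _ _)
  have k0 : k 0 = 0 := by simp [k]
  have k1 : k 1 = 1 := by simp [k]
  let D : ℝ × ((ℝ × ℝ) × ℝ × ℝ) → ℝ := fun q =>
    max 0 (b q.2.1 - a q.2.1) *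
      (k q.1 * bump (a q.2.1) (b q.2.1) (ρ q.2.1) q.2.2.1 q.2.2.2)
  have hD0 : ∀ q, 0 ≤ D q := fun q =>
    mul_nonneg (le_max_left _ _) (mul_nonneg (hk0 _) (bump_nonneg _ _ _ _ _))
  have hD1 : ∀ q, D q ≤ max 0 (b q.2.1 - a q.2.1) := by
    intro q
    rcases le_or_gt (b q.2.1) (a q.2.1) with h | h
    · simp only [D]
      rw [max_eq_left (by linarith), zero_mul]
    · refine mul_le_of_le_one_right (le_max_left _ _) ?_
      exact mul_le_one₀ (hk1 _) (bump_nonneg _ _ _ _ _) (bump_le_one _ _ h (hρpos _ h))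
  have hDc : Continuous D := by
    rw [continuous_iff_continuousAt]
    intro q
    rcases le_or_gt (b q.2.1) (a q.2.1) with h | h
    · have e0 : max 0 (b q.2.1 - a q.2.1) = 0 := max_eq_left (by linarith)
      have e : D q = 0 := by simp only [D]; rw [e0, zero_mul]
      have hcm : Continuous fun q : ℝ × ((ℝ × ℝ) × ℝ × ℝ) => max 0 (b q.2.1 - a q.2.1) := by
        fun_prop
      have ht := hcm.tendsto q
      rw [e0] at ht
      rw [ContinuousAt, e]
      exact squeeze_zero hD0 hD1 ht
    · have h1 := hρpos _ h
      have h2 : b q.2.1 + ρ q.2.1 - a q.2.1 ≠ 0 := by linarith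
      have h3 := h1.ne'
      simp only [D, bump]
      refine ContinuousAt.mul (by fun_prop) (ContinuousAt.mul (by fun_prop)
        (ContinuousAt.mul ?_ ?_))
      · exact ContinuousAt.sup continuousAt_const (continuousAt_const.sub
          (ContinuousAt.div (by fun_prop) (by fun_prop) h3))
      · exact ContinuousAt.sup continuousAt_const (ContinuousAt.inf
          (ContinuousAt.div (by fun_prop) (by fun_prop) h3)
          (ContinuousAt.div (by fun_prop) (by fun_prop) h2))
  have hmono : ∀ t x w, StrictMono fun z : ℝ => z + D (t, x, z, w) := by
    intro t x w z z' hz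
    change z + D (t, x, z, w) < z' + D (t, x, z', w)
    rcases le_or_gt (b x) (a x) with h | h
    · simp only [D]
      rw [max_eq_left (by linarith)]
      linarith
    · have hr := hρpos x h
      have hl := bump_lip z z' w h hr hz
      have hpos : 0 < b x + ρ x - a x := by linarith
      simp only [D]
      rw [max_eq_right (by linarith)]
      set B := bump (a x) (b x) (ρ x) z w
      set B' := bump (a x) (b x) (ρ x) z' w
      set δ := (z' - z) / (b x + ρ x - a x) with hδ
      have hδp : 0 < δ := div_pos (by linarith) hpos
      have hzz : z' - z = δ * (b x + ρ x - a x) := by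
        rw [hδ]; field_simp
      have i1 : k t * (B - B') ≤ δ := by
        nlinarith [hk0 t, hk1 t]
      nlinarith
  have hDt : ∀ t, Continuous fun p : (ℝ × ℝ) × ℝ × ℝ => p.2.1 + D (t, p) := by
    intro t; fun_prop
  have hsurj : ∀ t x w, Function.Surjective fun z : ℝ => z + D (t, x, z, w) := by
    intro t x w
    refine Continuous.surjective ((hDt t).comp (g := fun p : (ℝ × ℝ) × ℝ × ℝ => p.2.1 + D (t, p))
      (f := fun z => (x, z, w)) (by fun_prop)) ?_ ?_
    · exact Filter.tendsto_atTop_mono (fun z => by simpa using hD0 (t, x, z, w)) Filter.tendsto_id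
    · refine Filter.tendsto_atBot_mono (f := fun z => z + max 0 (b x - a x))
        (fun z => by have := hD1 (t, x, z, w); exact add_le_add_right this z) ?_
      exact Filter.tendsto_atBot_add_const_right _ _ Filter.tendsto_id
  choose H hH using fun t => fiber_homeo (fun p : (ℝ × ℝ) × ℝ × ℝ => p.2.1 + D (t, p)) (hDt t)
    (hmono t) (hsurj t)
  refine ⟨H, ?_, ?_, ?_, ?_⟩
  · simp only [hH]
    fun_prop
  · ext1 p
    rw [hH]
    simp [D, k0]
  · rintro ⟨x, z, w⟩ hp
    rw [hH]
    have : D (1, x, z, w) = 0 := by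
      simp only [D]
      rcases le_or_gt (b x) (a x) with h | h
      · rw [max_eq_left (by linarith), zero_mul]
      · rw [hbump0 x z w hp h]; simp
    simp [this]
  · intro x hx
    rw [hH]
    have : D (1, x, a x, 0) = b x - a x := by
      simp only [D]
      rcases hx.eq_or_lt with h | h
      · simp [h]
      · rw [max_eq_right (by linarith), k1]
        have hr := hρpos x h
        have : bump (a x) (b x) (ρ x) (a x) 0 = 1 := by
          unfold bump
          have e1 : (a x - a x + ρ x) / ρ x = 1 := by field_simp; ring
          have e2 : (b x + ρ x - a x) / (b x + ρ x - a x) = 1 := div_self (by linarith)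
          rw [e1, e2]; simp
        rw [this]; ring
    simp [this]

lemma axis_straighten (P Q : Prop) :
    ∃ (U V : ℝ → ℝ → ℝ) (a b : ℝ → ℝ), (Continuous fun p : ℝ × ℝ => U p.1 p.2) ∧
      (Continuous fun p : ℝ × ℝ => V p.1 p.2) ∧ Continuous a ∧ Continuous b ∧
      (∀ ξ z, V (U ξ z) z = ξ) ∧ (∀ u z, U (V u z) z = u) ∧
      ∀ ξ z, -1 ≤ z → z ≤ 1 →
        ((-1 ≤ U ξ z ∧ U ξ z ≤ 1) ↔ (a ξ ≤ z ∧ z ≤ b ξ)) ∧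
        ((P ∧ U ξ z = -1) ∨ (Q ∧ U ξ z = 1) → z = a ξ) ∧
        (z = a ξ → z = -1 ∨ (P ∧ U ξ z = -1) ∨ (Q ∧ U ξ z = 1)) ∧
        ((¬ P ∧ U ξ z = -1) ∨ (¬ Q ∧ U ξ z = 1) → z = b ξ) ∧
        (z = b ξ → z = 1 ∨ (¬ P ∧ U ξ z = -1) ∨ (¬ Q ∧ U ξ z = 1)) := by
  have hLc : Continuous fun ξ : ℝ => Real.log (max |ξ| (Real.exp (-1))) :=
    Continuous.log (by fun_prop) (fun ξ => (lt_max_of_lt_right (Real.exp_pos _)).ne')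
  have hLle : ∀ ξ z : ℝ, -1 ≤ z → (Real.log (max |ξ| (Real.exp (-1))) ≤ z ↔ |ξ| ≤ Real.exp z) := by
    intro ξ z hz
    rw [Real.log_le_iff_le_exp (lt_max_of_lt_right (Real.exp_pos _)), max_le_iff]
    exact ⟨fun h => h.1, fun h => ⟨h, Real.exp_le_exp.2 hz⟩⟩
  have hLeq : ∀ ξ z : ℝ, -1 ≤ z → |ξ| = Real.exp z →
      Real.log (max |ξ| (Real.exp (-1))) = z := by
    intro ξ z hz h
    rw [h, max_eq_left (Real.exp_le_exp.2 hz), Real.log_exp]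
  have hLeq' : ∀ ξ z : ℝ, z = Real.log (max |ξ| (Real.exp (-1))) →
      z = -1 ∨ |ξ| = Real.exp z := by
    intro ξ z h
    rcases le_total |ξ| (Real.exp (-1)) with h' | h'
    · left; rw [h, max_eq_right h', Real.log_exp]
    · right
      rw [max_eq_left h'] at h
      rw [h, Real.exp_log (lt_of_lt_of_le (Real.exp_pos _) h')]
  have hprod : ∀ ξ z : ℝ, ((-1 ≤ ξ * Real.exp (-z) ∧ ξ * Real.exp (-z) ≤ 1) ↔ |ξ| ≤ Real.exp z) := by
    intro ξ z
    rw [← abs_le, abs_mul, Real.abs_exp, Real.exp_neg, ← div_eq_mul_inv,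
      div_le_one (Real.exp_pos _)]
  have hprod' : ∀ ξ z : ℝ, ((ξ * Real.exp (-z) = -1 ∨ ξ * Real.exp (-z) = 1) ↔
      |ξ| = Real.exp z) := by
    intro ξ z
    rw [or_comm, ← abs_eq zero_le_one, abs_mul, Real.abs_exp, Real.exp_neg, ← div_eq_mul_inv,
      div_eq_one_iff_eq (Real.exp_pos _).ne']
  by_cases hP : P <;> by_cases hQ : Q
  · refine ⟨fun ξ z => ξ * Real.exp (-z), fun u z => u * Real.exp z,
      fun ξ => Real.log (max |ξ| (Real.exp (-1))), fun _ => 1, by fun_prop, by fun_prop, hLc,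
      continuous_const, ?_, ?_, ?_⟩
    · intro ξ z; beta_reduce; rw [mul_assoc, ← Real.exp_add]; simp
    · intro ξ z; beta_reduce; rw [mul_assoc, ← Real.exp_add]; simp
    · intro ξ z h1 h2
      simp only [hP, hQ, true_and, not_true_eq_false, false_and, or_false, false_imp_iff,
        hprod, hprod', hLle ξ z h1, h2, and_true, imp_self]
      exact ⟨fun h => (hLeq ξ z h1 h).symm, hLeq' ξ z⟩
  · refine ⟨fun ξ z => ξ + z, fun u z => u - z, fun ξ => -1 - ξ, fun ξ => 1 - ξ, by fun_prop,
      by fun_prop, by fun_prop, by fun_prop, ?_, ?_, ?_⟩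
    · intro ξ z; ring
    · intro ξ z; ring
    · intro ξ z h1 h2
      simp only [hP, hQ, true_and, not_true_eq_false, not_false_eq_true, false_and, or_false,
        false_or]
      refine ⟨⟨fun h => ⟨by linarith [h.1], by linarith [h.2]⟩,
        fun h => ⟨by linarith [h.1], by linarith [h.2]⟩⟩, fun h => by linarith,
        fun h => Or.inr (by linarith), fun h => by linarith, fun h => Or.inr (by linarith)⟩
  · refine ⟨fun ξ z => ξ - z, fun u z => u + z, fun ξ => ξ - 1, fun ξ => ξ + 1, by fun_prop,
      by fun_prop, by fun_prop, by fun_prop, ?_, ?_, ?_⟩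
    · intro ξ z; ring
    · intro ξ z; ring
    · intro ξ z h1 h2
      simp only [hP, hQ, true_and, not_true_eq_false, not_false_eq_true, false_and, or_false,
        false_or]
      refine ⟨⟨fun h => ⟨by linarith [h.2], by linarith [h.1]⟩,
        fun h => ⟨by linarith [h.2], by linarith [h.1]⟩⟩, fun h => by linarith,
        fun h => Or.inr (by linarith), fun h => by linarith, fun h => Or.inr (by linarith)⟩
  · refine ⟨fun ξ z => ξ * Real.exp (- -z), fun u z => u * Real.exp (-z),
      fun _ => -1, fun ξ => -Real.log (max |ξ| (Real.exp (-1))), by fun_prop, by fun_prop,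
      continuous_const, hLc.neg, ?_, ?_, ?_⟩
    · intro ξ z; beta_reduce; rw [mul_assoc, ← Real.exp_add]; simp
    · intro ξ z; beta_reduce; rw [mul_assoc, ← Real.exp_add]; simp
    · intro ξ z h1 h2
      have h3 : -1 ≤ -z := by linarith
      have e : z ≤ -Real.log (max |ξ| (Real.exp (-1))) ↔ |ξ| ≤ Real.exp (-z) := by
        rw [← hLle ξ (-z) h3]; exact le_neg
      simp only [hP, hQ, true_and, not_false_eq_true, false_and, or_false, false_imp_iff,
        hprod, hprod', e, h1, imp_self]
      refine ⟨fun h => ?_, fun h => ?_⟩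
      · have := hLeq ξ (-z) h3 h
        linarith
      · rcases hLeq' ξ (-z) (by linarith) with h | h
        · left; linarith
        · right; exact h

/-- The sphere is a surface. -/
@[reducible] noncomputable def sphere2Charted : ChartedSpace (EuclideanSpace ℝ (Fin 2)) ↥Sphere2 :=
  inferInstanceAs (ChartedSpace (EuclideanSpace ℝ (Fin 2))
    (Metric.sphere (0 : EuclideanSpace ℝ (Fin (2 + 1))) 1))

lemma m2_core (Ψ : (Fin 4 → ℝ) ≃ₜ ((ℝ × ℝ) × ℝ × ℝ)) (a b : ℝ × ℝ → ℝ) (ha : Continuous a)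
    (hb : Continuous b) (F A B K : Set (Fin 4 → ℝ))
    (hF : ∀ y z w, Ψ.symm (y, z, w) ∈ F ↔ w = 0 ∧ a y ≤ z ∧ z ≤ b y)
    (hA : ∀ x, x ∈ A ↔ x ∈ F ∧ (Ψ x).2.1 = a (Ψ x).1)
    (hB : ∀ x, x ∈ B ↔ x ∈ F ∧ (Ψ x).2.1 = b (Ψ x).1)
    (hK : Nonempty (↥K ≃ₜ ↥Sphere2)) (hKF : K ∩ F = A) :
    AmbientIsotopic K ((K \ A) ∪ B) := by
  obtain ⟨φ⟩ := hK
  have hAm : ∀ y z w, Ψ.symm (y, z, w) ∈ A ↔ w = 0 ∧ z = a y ∧ a y ≤ b y := by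
    intro y z w
    rw [hA, hF, Homeomorph.apply_symm_apply]
    constructor
    · rintro ⟨⟨h1, h2, h3⟩, h4⟩
      simp only at h4
      exact ⟨h1, h4, h2.trans h3⟩
    · rintro ⟨h1, h2, h3⟩
      exact ⟨⟨h1, h2.ge, h2 ▸ h3⟩, h2⟩
  have hBm : ∀ y z w, Ψ.symm (y, z, w) ∈ B ↔ w = 0 ∧ z = b y ∧ a y ≤ b y := by
    intro y z w
    rw [hB, hF, Homeomorph.apply_symm_apply]
    constructor
    · rintro ⟨⟨h1, h2, h3⟩, h4⟩
      simp only at h4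
      exact ⟨h1, h4, h2.trans h3⟩
    · rintro ⟨h1, h2, h3⟩
      exact ⟨⟨h1, h2 ▸ h3, h2.le⟩, h2⟩
  have hAK : A ⊆ K := hKF ▸ Set.inter_subset_left
  have hKcl : IsClosed K := by
    have : CompactSpace ↥Sphere2 := isCompact_iff_compactSpace.1 (isCompact_sphere _ _)
    have : CompactSpace ↥K := φ.symm.compactSpace
    exact (isCompact_iff_compactSpace.2 this).isClosed
  let _ : ChartedSpace (EuclideanSpace ℝ (Fin 2)) ↥Sphere2 := sphere2Charted
  have hcl : ∀ y, a y < b y → Ψ.symm (y, a y, 0) ∉ closure (K \ A) := by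
    intro y hy hcl
    have hmem : ∀ y', a y' < b y' → Ψ.symm (y', a y', 0) ∈ K := fun y' h =>
      hAK ((hAm _ _ _).2 ⟨rfl, rfl, h.le⟩)
    let U : Set (ℝ × ℝ) := {y' | a y' < b y'}
    let g : ℝ × ℝ → ↥Sphere2 := fun y' =>
      if h : a y' < b y' then φ ⟨Ψ.symm (y', a y', 0), hmem y' h⟩
      else φ ⟨Ψ.symm (y, a y, 0), hmem y hy⟩
    have hgU : ∀ y' (h : a y' < b y'), g y' = φ ⟨Ψ.symm (y', a y', 0), hmem y' h⟩ :=
      fun y' h => dif_pos h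
    have hgc : ContinuousOn g U := by
      rw [continuousOn_iff_continuous_domRestrict]
      have : U.domRestrict g = fun y' : U => φ ⟨Ψ.symm (y'.1, a y'.1, 0), hmem y'.1 y'.2⟩ := by
        ext1 y'
        exact hgU y'.1 y'.2
      rw [this]
      fun_prop
    have hgi : Set.InjOn g U := by
      intro y1 h1 y2 h2 h
      rw [hgU y1 h1, hgU y2 h2] at h
      have h3 := Ψ.symm.injective (Subtype.ext_iff.1 (φ.injective h))
      exact (Prod.ext_iff.1 h3).1
    have key := inv_domain_manifold g U (isOpen_lt ha hb) hgc hgi y hy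
    obtain ⟨N, hN, hNo, hyN⟩ := mem_interior.1 key
    obtain ⟨O, hO, hOe⟩ := isOpen_induced_iff.1 (hNo.preimage φ.continuous)
    have hp : Ψ.symm (y, a y, 0) ∈ O := by
      have : (⟨Ψ.symm (y, a y, 0), hmem y hy⟩ : ↥K) ∈ Subtype.val ⁻¹' O := by
        rw [hOe, Set.mem_preimage, ← hgU y hy]
        exact hyN
      exact this
    obtain ⟨q, hqO, hqK, hqA⟩ := mem_closure_iff.1 hcl O hO hp
    have hq : (⟨q, hqK⟩ : ↥K) ∈ φ ⁻¹' N := by rw [← hOe]; exact hqO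
    obtain ⟨y', hy', hye⟩ := hN hq
    rw [hgU y' hy'] at hye
    have h3 := Subtype.ext_iff.1 (φ.injective hye)
    simp only at h3
    exact hqA (h3 ▸ (hAm _ _ _).2 ⟨rfl, rfl, le_of_lt hy'⟩)
  obtain ⟨H, hHc, hH0, hH1, hHA⟩ := push_isotopy a b ha hb (Ψ.symm ⁻¹' (closure (K \ A)))
    (isClosed_closure.preimage Ψ.symm.continuous) (by
      intro y z hp hy h1 h2
      have hpK : Ψ.symm (y, z, 0) ∈ K := closure_minimal Set.sdiff_subset hKcl hp
      have hpA : Ψ.symm (y, z, 0) ∈ A := hKF ▸ ⟨hpK, (hF _ _ _).2 ⟨rfl, h1, h2⟩⟩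
      obtain ⟨-, rfl, -⟩ := (hAm _ _ _).1 hpA
      exact hcl y hy hp)
  refine ⟨fun t => (Ψ.trans (H t)).trans Ψ.symm, ?_, ?_, ?_⟩
  · exact Ψ.symm.continuous.comp (hHc.comp (f := fun q : ℝ × (Fin 4 → ℝ) => (q.1, Ψ q.2))
      (by fun_prop))
  · ext1 x
    simp [hH0]
  · have hfix : ∀ x ∈ K \ A, Ψ.symm (H 1 (Ψ x)) = x := by
      intro x hx
      rw [hH1 (Ψ x) (by simpa using subset_closure hx)]
      simp
    have hmove : ∀ y, a y ≤ b y → Ψ.symm (H 1 (Ψ (Ψ.symm (y, a y, 0)))) = Ψ.symm (y, b y, 0) := by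
      intro y hy
      rw [Homeomorph.apply_symm_apply, hHA y hy]
    ext x
    simp only [Set.mem_image, Homeomorph.trans_apply]
    constructor
    · rintro ⟨p, hp, rfl⟩
      by_cases hpA : p ∈ A
      · right
        obtain ⟨⟨y, z, w⟩, rfl⟩ := Ψ.symm.surjective p
        obtain ⟨rfl, rfl, hy⟩ := (hAm _ _ _).1 hpA
        rw [hmove y hy]
        exact (hBm _ _ _).2 ⟨rfl, rfl, hy⟩
      · left
        rw [hfix p ⟨hp, hpA⟩]
        exact ⟨hp, hpA⟩
    · rintro (hx | hx)
      · exact ⟨x, hx.1, hfix x hx⟩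
      · obtain ⟨⟨y, z, w⟩, rfl⟩ := Ψ.symm.surjective x
        obtain ⟨rfl, rfl, hy⟩ := (hBm _ _ _).1 hx
        exact ⟨Ψ.symm (y, a y, 0), hAK ((hAm _ _ _).2 ⟨rfl, rfl, hy⟩), hmove y hy⟩

/-- The normalized coordinate, taking values in `[-1, 1]` on the cube. -/
def ncoord (m : ℕ) (v : Fin 4 → ℤ) (i : Fin 4) (x : Fin 4 → ℝ) : ℝ := 2 * (m * x i - v i) - 1

/-- The square of the boundary of the cube on which the normalized coordinate `i` equals `c`. -/
def fc (m : ℕ) (v : Fin 4 → ℤ) (S : Finset (Fin 4)) (i : Fin 4) (c : ℝ) : Set (Fin 4 → ℝ) :=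
  {x | x ∈ sFace 4 m v S ∧ ncoord m v i x = c}

lemma mem_sFace_iff {m : ℕ} (hm : 0 < m) (v : Fin 4 → ℤ) (S : Finset (Fin 4)) (x : Fin 4 → ℝ) :
    x ∈ sFace 4 m v S ↔ (∀ i ∈ S, -1 ≤ ncoord m v i x ∧ ncoord m v i x ≤ 1) ∧
      ∀ i ∉ S, (m : ℝ) * x i - v i = 0 := by
  have hm' : (0 : ℝ) < m := by exact_mod_cast hm
  have h1 : ∀ i, (v i : ℝ) / m ≤ x i ∧ x i ≤ ((v i : ℝ) + 1) / m ↔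
      -1 ≤ ncoord m v i x ∧ ncoord m v i x ≤ 1 := by
    intro i
    rw [div_le_iff₀ hm', le_div_iff₀ hm']
    unfold ncoord
    constructor <;> rintro ⟨h1, h2⟩ <;> constructor <;> linarith
  have h2 : ∀ i, x i = (v i : ℝ) / m ↔ (m : ℝ) * x i - v i = 0 := by
    intro i
    rw [eq_div_iff hm'.ne', sub_eq_zero, mul_comm]
  simp only [sFace, Set.mem_ofPred_eq, h1, h2]
  exact ⟨fun h => ⟨fun i => (h i).1, fun i => (h i).2⟩, fun h i => ⟨h.1 i, h.2 i⟩⟩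

lemma fc_lo_eq {m : ℕ} (hm : 0 < m) (v : Fin 4 → ℤ) (S : Finset (Fin 4)) (i : Fin 4)
    (hi : i ∈ S) : fc m v S i (-1) = sFace 4 m v (S.erase i) := by
  ext x
  simp only [fc, Set.mem_ofPred_eq, mem_sFace_iff hm, Finset.mem_erase]
  constructor
  · rintro ⟨⟨h1, h2⟩, h3⟩
    refine ⟨fun j hj => h1 j hj.2, fun j hj => ?_⟩
    by_cases hji : j = i
    · subst hji; unfold ncoord at h3; linarith
    · exact h2 j fun h => hj ⟨hji, h⟩
  · rintro ⟨h1, h2⟩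
    have h3 : ncoord m v i x = -1 := by
      have := h2 i (by simp)
      unfold ncoord; linarith
    refine ⟨⟨fun j hj => ?_, fun j hj => h2 j fun h => hj h.2⟩, h3⟩
    by_cases hji : j = i
    · subst hji; rw [h3]; norm_num
    · exact h1 j ⟨hji, hj⟩

lemma fc_hi_eq {m : ℕ} (hm : 0 < m) (v : Fin 4 → ℤ) (S : Finset (Fin 4)) (i : Fin 4)
    (hi : i ∈ S) :
    fc m v S i 1 = sFace 4 m (Function.update v i (v i + 1)) (S.erase i) := by
  ext x
  simp only [fc, Set.mem_ofPred_eq, mem_sFace_iff hm, Finset.mem_erase]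
  have hne : ∀ j, j ≠ i → ncoord m (Function.update v i (v i + 1)) j x = ncoord m v j x := by
    intro j hj; simp [ncoord, Function.update_of_ne hj]
  constructor
  · rintro ⟨⟨h1, h2⟩, h3⟩
    refine ⟨fun j hj => by rw [hne j hj.1]; exact h1 j hj.2, fun j hj => ?_⟩
    by_cases hji : j = i
    · subst hji; unfold ncoord at h3; simp; linarith
    · rw [Function.update_of_ne hji]; exact h2 j fun h => hj ⟨hji, h⟩
  · rintro ⟨h1, h2⟩
    have h3 : ncoord m v i x = 1 := by
      have := h2 i (by simp)
      simp at this
      unfold ncoord; linarith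
    refine ⟨⟨fun j hj => ?_, fun j hj => ?_⟩, h3⟩
    · by_cases hji : j = i
      · subst hji; rw [h3]; norm_num
      · rw [← hne j hji]; exact h1 j ⟨hji, hj⟩
    · have hji : j ≠ i := fun h => hj (h ▸ hi)
      have := h2 j fun h => hj h.2
      rwa [Function.update_of_ne hji] at this

lemma faces_iff {m : ℕ} (hm : 0 < m) (v : Fin 4 → ℤ) (S : Finset (Fin 4)) (hS : S.card = 3)
    (G : Set (Fin 4 → ℝ)) :
    (G ∈ sFaces 4 m 2 ∧ G ⊆ sFace 4 m v S) ↔ ∃ i ∈ S, G = fc m v S i (-1) ∨ G = fc m v S i 1 := by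
  have hm' : (0 : ℝ) < m := by exact_mod_cast hm
  constructor
  · rintro ⟨⟨v', S', hS', rfl⟩, hsub⟩
    have p0 : (fun i => (v' i : ℝ) / m) ∈ sFace 4 m v' S' := by
      intro i
      refine ⟨fun _ => ⟨le_rfl, ?_⟩, fun _ => rfl⟩
      exact (div_le_div_iff_of_pos_right hm').2 (by linarith)
    have p1 : (fun i => ((v' i : ℝ) + if i ∈ S' then 1 else 0) / m) ∈ sFace 4 m v' S' := by
      intro i
      refine ⟨fun h => ?_, fun h => by simp [h]⟩
      simp only [h, if_true]
      refine ⟨?_, le_rfl⟩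
      exact (div_le_div_iff_of_pos_right hm').2 (by linarith)
    have q0 := hsub p0
    have q1 := hsub p1
    have hnS : ∀ j ∉ S, v' j = v j ∧ j ∉ S' := by
      intro j hj
      have e0 := (q0 j).2 hj
      have e1 := (q1 j).2 hj
      simp only [div_left_inj' hm'.ne'] at e0 e1
      refine ⟨by exact_mod_cast e0, fun h => ?_⟩
      rw [if_pos h] at e1
      linarith
    have hSub : S' ⊆ S := by
      intro j hj
      by_contra h
      exact (hnS j h).2 hj
    have hin : ∀ j ∈ S', v' j = v j := by
      intro j hj
      have e0 := ((q0 j).1 (hSub hj)).1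
      have e1 := ((q1 j).1 (hSub hj)).2
      simp only [div_le_div_iff_of_pos_right hm', if_pos hj] at e0 e1
      have f0 : v j ≤ v' j := by exact_mod_cast e0
      have f1 : v' j + 1 ≤ v j + 1 := by exact_mod_cast e1
      omega
    obtain ⟨i, hiS, hiS'⟩ : ∃ i ∈ S, i ∉ S' := by
      by_contra! h
      have := Finset.card_le_card h
      omega
    have hS'e : S' = S.erase i := by
      apply Finset.eq_of_subset_of_card_le
      · intro j hj
        exact Finset.mem_erase.2 ⟨fun h => hiS' (h ▸ hj), hSub hj⟩
      · rw [Finset.card_erase_of_mem hiS]; omega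
    have hother : ∀ j, j ≠ i → v' j = v j := by
      intro j hj
      by_cases h : j ∈ S
      · exact hin j (by rw [hS'e]; exact Finset.mem_erase.2 ⟨hj, h⟩)
      · exact (hnS j h).1
    have e0 := (q0 i).1 hiS
    simp only [div_le_div_iff_of_pos_right hm'] at e0
    have f0 : v i ≤ v' i := by exact_mod_cast e0.1
    have f1 : v' i ≤ v i + 1 := by exact_mod_cast e0.2
    refine ⟨i, hiS, ?_⟩
    rw [fc_lo_eq hm v S i hiS, fc_hi_eq hm v S i hiS, hS'e]
    rcases (by omega : v' i = v i ∨ v' i = v i + 1) with h | h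
    · left
      congr 1
      ext1 j
      by_cases hj : j = i
      · rw [hj, h]
      · exact hother j hj
    · right
      congr 1
      ext1 j
      by_cases hj : j = i
      · subst hj; simp [h]
      · rw [Function.update_of_ne hj]; exact hother j hj
  · rintro ⟨i, hi, rfl | rfl⟩
    · refine ⟨⟨v, S.erase i, ?_, fc_lo_eq hm v S i hi⟩, fun x hx => hx.1⟩
      rw [Finset.card_erase_of_mem hi, hS]
    · refine ⟨⟨_, S.erase i, ?_, fc_hi_eq hm v S i hi⟩, fun x hx => hx.1⟩
      rw [Finset.card_erase_of_mem hi, hS]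

/-- The center of the square `fc m v S i c`. -/
noncomputable def ctr (m : ℕ) (v : Fin 4 → ℤ) (S : Finset (Fin 4)) (i : Fin 4) (c : ℝ) :
    Fin 4 → ℝ :=
  fun j => if j = i then ((c + 1) / 2 + v j) / m else if j ∈ S then (1 / 2 + v j) / m
    else v j / m

lemma ncoord_ctr {m : ℕ} (hm : 0 < m) (v : Fin 4 → ℤ) (S : Finset (Fin 4)) (i j : Fin 4) (c : ℝ)
    (hj : j ∈ S) : ncoord m v j (ctr m v S i c) = if j = i then c else 0 := by
  have hm' : (m : ℝ) ≠ 0 := by exact_mod_cast hm.ne'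
  unfold ncoord ctr
  split_ifs <;> field_simp <;> ring

lemma ctr_mem {m : ℕ} (hm : 0 < m) (v : Fin 4 → ℤ) (S : Finset (Fin 4)) (i : Fin 4) (c : ℝ)
    (hi : i ∈ S) (hc : c = -1 ∨ c = 1) : ctr m v S i c ∈ fc m v S i c := by
  have hm' : (m : ℝ) ≠ 0 := by exact_mod_cast hm.ne'
  refine ⟨(mem_sFace_iff hm v S _).2 ⟨fun j hj => ?_, fun j hj => ?_⟩, ?_⟩
  · rw [ncoord_ctr hm v S i j c hj]
    rcases hc with rfl | rfl <;> split_ifs <;> norm_num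
  · have : j ≠ i := fun h => hj (h ▸ hi)
    simp only [ctr, if_neg this, if_neg hj]
    field_simp
    ring
  · rw [ncoord_ctr hm v S i i c hi, if_pos rfl]

lemma fc_ne {m : ℕ} (hm : 0 < m) (v : Fin 4 → ℤ) (S : Finset (Fin 4)) (i i' : Fin 4) (c c' : ℝ)
    (hi : i ∈ S) (hi' : i' ∈ S) (hc : c = -1 ∨ c = 1) (hc' : c' = -1 ∨ c' = 1)
    (h : fc m v S i c = fc m v S i' c') : i = i' ∧ c = c' := by
  have h1 := ctr_mem hm v S i c hi hc
  rw [h] at h1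
  have h2 := h1.2
  rw [ncoord_ctr hm v S i i' c hi'] at h2
  split_ifs at h2 with h3
  · exact ⟨h3.symm, h2⟩
  · rcases hc' with rfl | rfl <;> norm_num at h2

/-- A disk is connected, hence some axis of the cube is mixed: exactly one of its two squares
belongs to the disk. -/
lemma exists_mixed {m : ℕ} (hm : 0 < m) (v : Fin 4 → ℤ) (S : Finset (Fin 4))
    (𝒜 : Set (Set (Fin 4 → ℝ)))
    (h𝒜 : ∀ G ∈ 𝒜, ∃ i ∈ S, G = fc m v S i (-1) ∨ G = fc m v S i 1)
    (hne : 𝒜.Nonempty) (hcard : 𝒜.ncard ≤ 3) (hd : Nonempty (↥(⋃₀ 𝒜) ≃ₜ ↥Disk2)) :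
    ∃ k ∈ S, ¬ (fc m v S k (-1) ∈ 𝒜 ↔ fc m v S k 1 ∈ 𝒜) := by
  by_contra! hcon
  have hfin : 𝒜.Finite := by
    refine Set.Finite.subset ((Set.toFinite (S : Set (Fin 4))).biUnion
      (t := fun i => {fc m v S i (-1), fc m v S i 1}) (fun i _ => Set.toFinite _)) ?_
    intro G hG
    obtain ⟨i, hi, h⟩ := h𝒜 G hG
    exact Set.mem_biUnion hi h
  obtain ⟨G, hG⟩ := hne
  obtain ⟨i, hi, hGi⟩ := h𝒜 G hG
  have hlo : fc m v S i (-1) ∈ 𝒜 := by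
    rcases hGi with rfl | rfl
    · exact hG
    · exact (hcon i hi).2 hG
  have hhi : fc m v S i 1 ∈ 𝒜 := (hcon i hi).1 hlo
  have honly : ∀ i' ∈ S, (fc m v S i' (-1) ∈ 𝒜 ∨ fc m v S i' 1 ∈ 𝒜) → i' = i := by
    intro i' hi' h
    by_contra hii
    have hlo' : fc m v S i' (-1) ∈ 𝒜 := h.elim id (hcon i' hi').2
    have hhi' : fc m v S i' 1 ∈ 𝒜 := (hcon i' hi').1 hlo'
    let T : Finset (Set (Fin 4 → ℝ)) :=
      {fc m v S i (-1), fc m v S i 1, fc m v S i' (-1), fc m v S i' 1}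
    have hT : (T : Set (Set (Fin 4 → ℝ))) ⊆ 𝒜 := by
      intro X hX
      simp only [T, Finset.coe_insert, Finset.coe_singleton, Set.mem_insert_iff,
        Set.mem_singleton_iff] at hX
      rcases hX with rfl | rfl | rfl | rfl <;> assumption
    have hTc : T.card = 4 := by
      have n1 : fc m v S i (-1) ≠ fc m v S i 1 := fun h => by
        have := (fc_ne hm v S _ _ _ _ hi hi (by simp) (by simp) h).2
        norm_num at this
      have n2 : fc m v S i' (-1) ≠ fc m v S i' 1 := fun h => by
        have := (fc_ne hm v S _ _ _ _ hi' hi' (by simp) (by simp) h).2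
        norm_num at this
      have n3 : ∀ c c' : ℝ, (c = -1 ∨ c = 1) → (c' = -1 ∨ c' = 1) →
          fc m v S i c ≠ fc m v S i' c' := fun c c' hc hc' h =>
        hii (fc_ne hm v S _ _ _ _ hi hi' hc hc' h).1.symm
      simp only [T]
      rw [Finset.card_insert_of_notMem, Finset.card_insert_of_notMem,
        Finset.card_insert_of_notMem, Finset.card_singleton]
      · simpa using n2
      · simp [n3]
      · simp [n1, n3]
    have := Set.ncard_le_ncard hT hfin
    rw [Set.ncard_coe_finset, hTc] at this
    omega
  have hval : ∀ x ∈ ⋃₀ 𝒜, ncoord m v i x = -1 ∨ ncoord m v i x = 1 := by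
    rintro x ⟨G', hG', hx⟩
    obtain ⟨i', hi', h⟩ := h𝒜 G' hG'
    have : i' = i := honly i' hi' (by rcases h with rfl | rfl <;> simp [hG'])
    subst this
    rcases h with rfl | rfl
    · exact Or.inl hx.2
    · exact Or.inr hx.2
  obtain ⟨φ⟩ := hd
  have hconn : IsPreconnected (⋃₀ 𝒜) := by
    have h1 : PreconnectedSpace ↥Disk2 :=
      isPreconnected_iff_preconnectedSpace.1 (convex_closedBall _ _).isPreconnected
    exact isPreconnected_iff_preconnectedSpace.2
      (φ.symm.surjective.denseRange.preconnectedSpace φ.symm.continuous)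
  have hnc : Continuous (ncoord m v i) := by unfold ncoord; fun_prop
  have := hconn.intermediate_value ⟨_, hlo, ctr_mem hm v S i (-1) hi (by simp)⟩
    ⟨_, hhi, ctr_mem hm v S i 1 hi (by simp)⟩ hnc.continuousOn
  rw [ncoord_ctr hm v S i i _ hi, ncoord_ctr hm v S i i _ hi, if_pos rfl, if_pos rfl] at this
  obtain ⟨x, hx, hx0⟩ := this (show (0 : ℝ) ∈ Set.Icc (-1) 1 by norm_num)
  rcases hval x hx with h | h <;> rw [hx0] at h <;> norm_num at h

lemma exists_straighten {m : ℕ} (hm : 0 < m) (v : Fin 4 → ℤ) (i₁ i₂ k j : Fin 4)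
    (h12 : i₁ ≠ i₂) (h1k : i₁ ≠ k) (h1j : i₁ ≠ j) (h2k : i₂ ≠ k) (h2j : i₂ ≠ j) (hkj : k ≠ j)
    (σ : ℝ) (hσ : σ * σ = 1) (U₁ V₁ U₂ V₂ : ℝ → ℝ → ℝ)
    (hU₁ : Continuous fun p : ℝ × ℝ => U₁ p.1 p.2) (hV₁ : Continuous fun p : ℝ × ℝ => V₁ p.1 p.2)
    (hU₂ : Continuous fun p : ℝ × ℝ => U₂ p.1 p.2) (hV₂ : Continuous fun p : ℝ × ℝ => V₂ p.1 p.2)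
    (hVU₁ : ∀ ξ z, V₁ (U₁ ξ z) z = ξ) (hUV₁ : ∀ u z, U₁ (V₁ u z) z = u)
    (hVU₂ : ∀ ξ z, V₂ (U₂ ξ z) z = ξ) (hUV₂ : ∀ u z, U₂ (V₂ u z) z = u) :
    ∃ Ψ : (Fin 4 → ℝ) ≃ₜ ((ℝ × ℝ) × ℝ × ℝ), ∀ y z w,
      ncoord m v i₁ (Ψ.symm (y, z, w)) = U₁ y.1 z ∧ ncoord m v i₂ (Ψ.symm (y, z, w)) = U₂ y.2 z ∧
      ncoord m v k (Ψ.symm (y, z, w)) = σ * z ∧ m * (Ψ.symm (y, z, w)) j - v j = w := by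
  have hm' : (m : ℝ) ≠ 0 := by exact_mod_cast hm.ne'
  have hnc : ∀ i, Continuous (ncoord m v i) := fun i => by unfold ncoord; fun_prop
  let f : (Fin 4 → ℝ) → (ℝ × ℝ) × ℝ × ℝ := fun x =>
    ((V₁ (ncoord m v i₁ x) (σ * ncoord m v k x), V₂ (ncoord m v i₂ x) (σ * ncoord m v k x)),
      σ * ncoord m v k x, m * x j - v j)
  let un : Fin 4 → ℝ → ℝ := fun i u => ((u + 1) / 2 + v i) / m
  let g : (ℝ × ℝ) × ℝ × ℝ → (Fin 4 → ℝ) := fun p i =>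
    if i = i₁ then un i (U₁ p.1.1 p.2.1) else if i = i₂ then un i (U₂ p.1.2 p.2.1)
    else if i = k then un i (σ * p.2.1) else (p.2.2 + v i) / m
  have g1 : ∀ p, ncoord m v i₁ (g p) = U₁ p.1.1 p.2.1 := by
    intro p; simp only [ncoord, g, un, if_true]; field_simp; ring
  have g2 : ∀ p, ncoord m v i₂ (g p) = U₂ p.1.2 p.2.1 := by
    intro p; simp only [ncoord, g, un, if_true, if_neg h12.symm]; field_simp; ring
  have g3 : ∀ p, ncoord m v k (g p) = σ * p.2.1 := by
    intro p; simp only [ncoord, g, un, if_true, if_neg h1k.symm, if_neg h2k.symm]; field_simp; ring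
  have g4 : ∀ p, m * (g p) j - v j = p.2.2 := by
    intro p; simp only [g, if_neg h1j.symm, if_neg h2j.symm, if_neg hkj.symm]; field_simp; ring
  have hσ2 : ∀ z, σ * (σ * z) = z := fun z => by rw [← mul_assoc, hσ, one_mul]
  have hun : ∀ i x, un i (ncoord m v i x) = x i := by
    intro i x; simp only [un, ncoord]; field_simp; ring
  have hall : ∀ i, i ≠ i₁ → i ≠ i₂ → i ≠ k → i = j := by
    intro i e1 e2 e3
    simp only [ne_eq, Fin.ext_iff] at h12 h1k h1j h2k h2j hkj e1 e2 e3 ⊢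
    have := i.isLt
    have := i₁.isLt
    have := i₂.isLt
    have := k.isLt
    have := j.isLt
    omega
  let Ψ : (Fin 4 → ℝ) ≃ₜ ((ℝ × ℝ) × ℝ × ℝ) :=
    { toFun := f
      invFun := g
      left_inv := by
        intro x
        ext1 i
        simp only [g, f]
        split_ifs with e1 e2 e3
        · rw [hUV₁, e1, hun]
        · rw [hUV₂, e2, hun]
        · rw [hσ2, e3, hun]
        · rw [hall i e1 e2 e3]; field_simp; ring
      right_inv := by
        rintro ⟨⟨ξ, η⟩, z, w⟩
        simp only [f, g1, g2, g3, g4, hσ2, hVU₁, hVU₂]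
      continuous_toFun := by
        have c0 : Continuous fun x => σ * ncoord m v k x := continuous_const.mul (hnc k)
        exact ((hV₁.comp ((hnc i₁).prodMk c0)).prodMk (hV₂.comp ((hnc i₂).prodMk c0))).prodMk
          (c0.prodMk (by fun_prop))
      continuous_invFun := by
        refine continuous_pi fun i => ?_
        have c1 : Continuous fun p : (ℝ × ℝ) × ℝ × ℝ => U₁ p.1.1 p.2.1 :=
          hU₁.comp (f := fun p : (ℝ × ℝ) × ℝ × ℝ => (p.1.1, p.2.1)) (by fun_prop)
        have c2 : Continuous fun p : (ℝ × ℝ) × ℝ × ℝ => U₂ p.1.2 p.2.1 :=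
          hU₂.comp (f := fun p : (ℝ × ℝ) × ℝ × ℝ => (p.1.2, p.2.1)) (by fun_prop)
        simp only [g, un]
        split_ifs <;> fun_prop }
  exact ⟨Ψ, fun y z w => ⟨g1 _, g2 _, g3 _, g4 _⟩⟩

/-- Each face boundary move (M2) extends to an ambient isotopy of ℝ⁴;
in particular a cubical 2-knot and its image under an M2-move are ambient isotopic. -/
theorem m2_move_ambient_isotopic (K K' : Set (Fin 4 → ℝ))
    (hK : IsCubical2Knot K) (h : M2Move K K') :
    AmbientIsotopic K K' := by
  obtain ⟨m, hm, F, ⟨v, S, hS, rfl⟩, 𝒜, h𝒜, hne, hcard, hKF, hdisk, rfl⟩ := h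
  have h𝒜' : ∀ G ∈ 𝒜, ∃ i ∈ S, G = fc m v S i (-1) ∨ G = fc m v S i 1 := fun G hG =>
    (faces_iff hm v S hS G).1 (h𝒜 hG)
  obtain ⟨k, hk, hmix⟩ := exists_mixed hm v S 𝒜 h𝒜' hne hcard hdisk
  have hcard2 : (S.erase k).card = 2 := by rw [Finset.card_erase_of_mem hk, hS]
  obtain ⟨i₁, i₂, h12, hSe⟩ := Finset.card_eq_two.1 hcard2
  obtain ⟨j, hj⟩ : ∃ j, j ∉ S := by
    by_contra! hh
    have : S = Finset.univ := Finset.eq_univ_of_forall hh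
    rw [this] at hS
    simp at hS
  have m1 : i₁ ∈ S.erase k := by rw [hSe]; simp
  have m2 : i₂ ∈ S.erase k := by rw [hSe]; simp
  obtain ⟨h1k, h1S⟩ := Finset.mem_erase.1 m1
  obtain ⟨h2k, h2S⟩ := Finset.mem_erase.1 m2
  have hSall : ∀ i, i ∈ S ↔ i = k ∨ i = i₁ ∨ i = i₂ := by
    intro i
    rw [← Finset.insert_erase hk, hSe]
    simp
  have hnj : ∀ i ∈ S, i ≠ j := fun i hi h => hj (h ▸ hi)
  have hnS : ∀ i, i ∉ S ↔ i = j := by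
    have hc : (Sᶜ).card = 1 := by rw [Finset.card_compl, hS]; rfl
    obtain ⟨j', hj'⟩ := Finset.card_eq_one.1 hc
    have hmem : ∀ i, i ∉ S ↔ i = j' := fun i => by
      rw [← Finset.mem_compl, hj', Finset.mem_singleton]
    intro i
    rw [hmem, (hmem j).1 hj]
  obtain ⟨U₁, V₁, a₁, b₁, hU₁, hV₁, ha₁, hb₁, hVU₁, hUV₁, ax₁⟩ :=
    axis_straighten (fc m v S i₁ (-1) ∈ 𝒜) (fc m v S i₁ 1 ∈ 𝒜)
  obtain ⟨U₂, V₂, a₂, b₂, hU₂, hV₂, ha₂, hb₂, hVU₂, hUV₂, ax₂⟩ :=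
    axis_straighten (fc m v S i₂ (-1) ∈ 𝒜) (fc m v S i₂ 1 ∈ 𝒜)
  obtain ⟨σ, hσ, hσA, hσB⟩ : ∃ σ : ℝ, (σ = 1 ∨ σ = -1) ∧
      (∀ z, ((fc m v S k (-1) ∈ 𝒜 ∧ σ * z = -1) ∨ (fc m v S k 1 ∈ 𝒜 ∧ σ * z = 1)) ↔ z = -1) ∧
      (∀ z, ((fc m v S k (-1) ∉ 𝒜 ∧ σ * z = -1) ∨ (fc m v S k 1 ∉ 𝒜 ∧ σ * z = 1)) ↔ z = 1) := by
    by_cases hP : fc m v S k (-1) ∈ 𝒜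
    · have hQ : fc m v S k 1 ∉ 𝒜 := fun hQ => hmix ⟨fun _ => hQ, fun _ => hP⟩
      exact ⟨1, by simp, by simp [hP, hQ], by simp [hP, hQ]⟩
    · have hQ : fc m v S k 1 ∈ 𝒜 := by
        by_contra hQ
        exact hmix ⟨fun h => absurd h hP, fun h => absurd h hQ⟩
      refine ⟨-1, by simp, fun z => ?_, fun z => ?_⟩
      · simp only [hP, hQ, false_and, true_and, false_or]
        constructor <;> intro h <;> linarith
      · simp only [hP, hQ, not_false_eq_true, not_true_eq_false, false_and, true_and, or_false]
        constructor <;> intro h <;> linarith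
  obtain ⟨Ψ, hΨ⟩ := exists_straighten hm v i₁ i₂ k j h12 h1k (hnj _ h1S) h2k (hnj _ h2S)
    (hnj _ hk) σ (by rcases hσ with rfl | rfl <;> norm_num) U₁ V₁ U₂ V₂ hU₁ hV₁ hU₂ hV₂
    hVU₁ hUV₁ hVU₂ hUV₂
  have hσI : ∀ z, (-1 ≤ σ * z ∧ σ * z ≤ 1) ↔ (-1 ≤ z ∧ z ≤ 1) := by
    intro z
    rcases hσ with rfl | rfl
    · simp
    · constructor <;> rintro ⟨h1, h2⟩ <;> constructor <;> linarith
  let a : ℝ × ℝ → ℝ := fun y => max (-1) (max (a₁ y.1) (a₂ y.2))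
  let b : ℝ × ℝ → ℝ := fun y => min 1 (min (b₁ y.1) (b₂ y.2))
  have ha : Continuous a := by fun_prop
  have hb : Continuous b := by fun_prop
  have hF0 : ∀ y z w, Ψ.symm (y, z, w) ∈ sFace 4 m v S ↔
      w = 0 ∧ (-1 ≤ z ∧ z ≤ 1) ∧ (-1 ≤ U₁ y.1 z ∧ U₁ y.1 z ≤ 1) ∧
        (-1 ≤ U₂ y.2 z ∧ U₂ y.2 z ≤ 1) := by
    intro y z w
    obtain ⟨e1, e2, e3, e4⟩ := hΨ y z w
    have hN : (∀ i ∉ S, (m : ℝ) * Ψ.symm (y, z, w) i - v i = 0) ↔ w = 0 := by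
      simp only [hnS, forall_eq, e4]
    rw [mem_sFace_iff hm, hN]
    simp only [hSall, forall_eq_or_imp, forall_eq, e1, e2, e3, hσI]
    tauto
  have hF : ∀ y z w, Ψ.symm (y, z, w) ∈ sFace 4 m v S ↔ w = 0 ∧ a y ≤ z ∧ z ≤ b y := by
    intro y z w
    rw [hF0]
    simp only [a, b, max_le_iff, le_min_iff]
    constructor
    · rintro ⟨h0, ⟨h1, h2⟩, h3, h4⟩
      have h5 := ((ax₁ y.1 z h1 h2).1).1 h3
      have h6 := ((ax₂ y.2 z h1 h2).1).1 h4
      exact ⟨h0, ⟨h1, h5.1, h6.1⟩, h2, h5.2, h6.2⟩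
    · rintro ⟨h0, ⟨h1, h5, h6⟩, h2, h7, h8⟩
      exact ⟨h0, ⟨h1, h2⟩, ((ax₁ y.1 z h1 h2).1).2 ⟨h5, h7⟩, ((ax₂ y.2 z h1 h2).1).2 ⟨h6, h8⟩⟩
  have hA0 : ∀ x, x ∈ ⋃₀ 𝒜 ↔ x ∈ sFace 4 m v S ∧
      ∃ i ∈ S, (fc m v S i (-1) ∈ 𝒜 ∧ ncoord m v i x = -1) ∨
        (fc m v S i 1 ∈ 𝒜 ∧ ncoord m v i x = 1) := by
    intro x
    constructor
    · rintro ⟨G, hG, hx⟩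
      obtain ⟨i, hi, rfl | rfl⟩ := h𝒜' G hG
      · exact ⟨hx.1, i, hi, Or.inl ⟨hG, hx.2⟩⟩
      · exact ⟨hx.1, i, hi, Or.inr ⟨hG, hx.2⟩⟩
    · rintro ⟨hx, i, hi, ⟨hG, he⟩ | ⟨hG, he⟩⟩
      · exact ⟨_, hG, hx, he⟩
      · exact ⟨_, hG, hx, he⟩
  have hB0 : ∀ x, x ∈ ⋃₀ ({G ∈ sFaces 4 m 2 | G ⊆ sFace 4 m v S} \ 𝒜) ↔ x ∈ sFace 4 m v S ∧
      ∃ i ∈ S, (fc m v S i (-1) ∉ 𝒜 ∧ ncoord m v i x = -1) ∨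
        (fc m v S i 1 ∉ 𝒜 ∧ ncoord m v i x = 1) := by
    intro x
    constructor
    · rintro ⟨G, ⟨hG', hG⟩, hx⟩
      obtain ⟨i, hi, rfl | rfl⟩ := (faces_iff hm v S hS G).1 hG'
      · exact ⟨hx.1, i, hi, Or.inl ⟨hG, hx.2⟩⟩
      · exact ⟨hx.1, i, hi, Or.inr ⟨hG, hx.2⟩⟩
    · rintro ⟨hx, i, hi, ⟨hG, he⟩ | ⟨hG, he⟩⟩
      · exact ⟨_, ⟨(faces_iff hm v S hS _).2 ⟨i, hi, Or.inl rfl⟩, hG⟩, hx, he⟩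
      · exact ⟨_, ⟨(faces_iff hm v S hS _).2 ⟨i, hi, Or.inr rfl⟩, hG⟩, hx, he⟩
  refine m2_core Ψ a b ha hb (sFace 4 m v S) (⋃₀ 𝒜) _ K hF ?_ ?_ hK.1 hKF
  · intro x
    obtain ⟨⟨y, z, w⟩, rfl⟩ := Ψ.symm.surjective x
    rw [hA0, Homeomorph.apply_symm_apply]
    refine and_congr_right fun hx => ?_
    obtain ⟨e1, e2, e3, e4⟩ := hΨ y z w
    obtain ⟨-, ⟨hz1, hz2⟩, -, -⟩ := (hF0 y z w).1 hx
    obtain ⟨-, hal, -⟩ := (hF y z w).1 hx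
    obtain ⟨-, p1, p2, -, -⟩ := ax₁ y.1 z hz1 hz2
    obtain ⟨-, q1, q2, -, -⟩ := ax₂ y.2 z hz1 hz2
    simp only [hSall, exists_eq_or_imp, exists_eq_left, e1, e2, e3, hσA]
    have l0 : -1 ≤ a y := le_max_left _ _
    have l1 : a₁ y.1 ≤ a y := (le_max_left _ _).trans (le_max_right _ _)
    have l2 : a₂ y.2 ≤ a y := (le_max_right _ _).trans (le_max_right _ _)
    constructor
    · rintro (h | h | h)
      · exact le_antisymm (by linarith) hal
      · exact le_antisymm ((p1 h).le.trans l1) hal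
      · exact le_antisymm ((q1 h).le.trans l2) hal
    · intro h
      have hmax : a y = -1 ∨ a y = a₁ y.1 ∨ a y = a₂ y.2 := by
        simp only [a]
        rcases max_choice (-1) (max (a₁ y.1) (a₂ y.2)) with e | e
        · exact Or.inl e
        · rw [e]; exact Or.inr (max_choice _ _)
      rcases hmax with e | e | e
      · exact Or.inl (h.trans e)
      · rcases p2 (h.trans e) with r | r
        · exact Or.inl r
        · exact Or.inr (Or.inl r)
      · rcases q2 (h.trans e) with r | r
        · exact Or.inl r
        · exact Or.inr (Or.inr r)
  · intro x
    obtain ⟨⟨y, z, w⟩, rfl⟩ := Ψ.symm.surjective x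
    rw [hB0, Homeomorph.apply_symm_apply]
    refine and_congr_right fun hx => ?_
    obtain ⟨e1, e2, e3, e4⟩ := hΨ y z w
    obtain ⟨-, ⟨hz1, hz2⟩, -, -⟩ := (hF0 y z w).1 hx
    obtain ⟨-, -, hbl⟩ := (hF y z w).1 hx
    obtain ⟨-, -, -, p1, p2⟩ := ax₁ y.1 z hz1 hz2
    obtain ⟨-, -, -, q1, q2⟩ := ax₂ y.2 z hz1 hz2
    simp only [hSall, exists_eq_or_imp, exists_eq_left, e1, e2, e3, hσB]
    have l0 : b y ≤ 1 := min_le_left _ _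
    have l1 : b y ≤ b₁ y.1 := (min_le_right _ _).trans (min_le_left _ _)
    have l2 : b y ≤ b₂ y.2 := (min_le_right _ _).trans (min_le_right _ _)
    constructor
    · rintro (h | h | h)
      · exact le_antisymm hbl (by linarith)
      · exact le_antisymm hbl (l1.trans (p1 h).ge)
      · exact le_antisymm hbl (l2.trans (q1 h).ge)
    · intro h
      have hmin : b y = 1 ∨ b y = b₁ y.1 ∨ b y = b₂ y.2 := by
        simp only [b]
        rcases min_choice 1 (min (b₁ y.1) (b₂ y.2)) with e | e
        · exact Or.inl e
        · rw [e]; exact Or.inr (min_choice _ _)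
      rcases hmin with e | e | e
      · exact Or.inl (h.trans e)
      · rcases p2 (h.trans e) with r | r
        · exact Or.inl r
        · exact Or.inr (Or.inl r)
      · rcases q2 (h.trans e) with r | r
        · exact Or.inl r
        · exact Or.inr (Or.inr r)
end

section
/- Let Q⁴ be a unit 4-cube and let A² be the union of three pairwise-neighboring 2-faces of Q⁴ (three squares pairwise sharing an edge, forming a disk). Then A² meets (shares at least an edge or vertex with) exactly fifteen other 2-faces of Q⁴, and the remaining six 2-faces of Q⁴ disjoint from A² are all contained in a single 3-face C³ of Q⁴. -/
open scoped Classical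

/-- The unit 4-cube `[0,1]⁴`. -/
def Q4 : Set (Fin 4 → ℝ) := sFace 4 1 0 Finset.univ

/-- The 2-faces of the unit 4-cube. -/
def twoFacesQ4 : Set (Set (Fin 4 → ℝ)) := {G ∈ sFaces 4 1 2 | G ⊆ Q4}

/-- The 3-faces of the unit 4-cube. -/
def threeFacesQ4 : Set (Set (Fin 4 → ℝ)) := {G ∈ sFaces 4 1 3 | G ⊆ Q4}

/-- Two 2-faces are neighboring if they share an edge (a 1-face). -/
def Neighboring (F G : Set (Fin 4 → ℝ)) : Prop :=
  F ≠ G ∧ F ∩ G ∈ sFaces 4 1 1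

theorem exp_log_lift {E : Type} [NormedAddCommGroup E] [NormedSpace ℝ E] {S : Set E}
    (hS : Convex ℝ S) (hne : S.Nonempty) (f : S → ℂ) (hf : Continuous f) (h0 : ∀ x, f x ≠ 0) :
    ∃ φ : S → ℂ, Continuous φ ∧ ∀ x, Complex.exp (φ x) = f x := by
  have := hS.locallyPathConnectedSpace
  have := hS.contractibleSpace hne
  obtain ⟨x₀, hx₀⟩ := hne
  obtain ⟨F, ⟨-, hF⟩, -⟩ := Complex.isCoveringMapOn_exp.existsUnique_continuousMap_lifts
    (⟨f, hf⟩ : C(S, ℂ)) (a₀ := ⟨x₀, hx₀⟩) (Complex.exp_log (h0 ⟨x₀, hx₀⟩)) (fun x => h0 x)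
  exact ⟨F, F.continuous, fun x => congrFun hF x⟩

theorem exp_log_lift_univ {E : Type} [NormedAddCommGroup E] [NormedSpace ℝ E]
    (f : E → ℂ) (hf : Continuous f) (h0 : ∀ x, f x ≠ 0) :
    ∃ φ : E → ℂ, Continuous φ ∧ ∀ x, Complex.exp (φ x) = f x := by
  obtain ⟨φ, hφ, h⟩ := exp_log_lift (convex_univ (𝕜 := ℝ) (E := E)) ⟨0, trivial⟩
    (fun x => f x) (by fun_prop) (fun x => h0 x)
  exact ⟨fun x => φ ⟨x, trivial⟩, by fun_prop, fun x => h _⟩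

theorem exp_lift_unique {Z : Type} [TopologicalSpace Z] [PreconnectedSpace Z]
    (φ ψ : Z → ℂ) (hφ : Continuous φ) (hψ : Continuous ψ)
    (h : ∀ z, Complex.exp (φ z) = Complex.exp (ψ z)) (z w : Z) :
    φ z - ψ z = φ w - ψ w := by
  have h1 : Complex.exp (φ w - ψ w) = 1 := by
    rw [Complex.exp_sub, h, div_self (Complex.exp_ne_zero _)]
  have := Complex.isCoveringMap_exp.eq_of_comp_eq (g₁ := φ) (g₂ := fun z => ψ z + (φ w - ψ w))
    hφ (by fun_prop) (by
      funext z
      apply Subtype.ext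
      simp [Complex.exp_add, h1, h]) w (by ring)
  have := congrFun this z
  have h3 : φ z = ψ z + (φ w - ψ w) := this
  rw [h3]; ring

open unitInterval in
theorem no_book_aux {B : Type} [TopologicalSpace B] (e : B ≃ₜ Metric.closedBall (0 : ℂ) 1) (q : B)
    (P : Fin 3 → I → B) (hP : ∀ k, Continuous (P k)) (hPq : ∀ k s, P k s ≠ q)
    (h0 : ∀ k l, P k 0 = P l 0) (h1 : ∀ k l, P k 1 = P l 1)
    (F : Fin 3 → B → ℂ) (hF : ∀ k, Continuous (F k)) (hF0 : ∀ k b, F k b = 0 → b = q)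
    (hFP : ∀ k j s, F k (P j s) = -(1/2) * Complex.exp (
      (if j = k then -1 else 1) * (Real.pi * Complex.I) * ((s : ℝ) : ℂ))) : False := by
  have hI : (Real.pi : ℂ) * Complex.I ≠ 0 := by
    simp [Real.pi_ne_zero]
  -- change of logarithm along a path
  have key : ∀ (k j : Fin 3) (φ : I → ℂ), Continuous φ →
      (∀ s, Complex.exp (φ s) = F k (P j s)) →
      φ 1 - φ 0 = (if j = k then -1 else 1) * (Real.pi * Complex.I) := by
    intro k j φ hφ h
    have := exp_lift_unique φ (fun s => Complex.log (-(1/2)) + (if j = k then -1 else 1) * (Real.pi * Complex.I) * ((s : ℝ) : ℂ))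
      hφ (by fun_prop) (by
        intro s
        rw [h, hFP, Complex.exp_add, Complex.exp_log (by norm_num)]) 1 0
    simp only [Set.Icc.coe_one, Set.Icc.coe_zero, Complex.ofReal_one, Complex.ofReal_zero] at this
    linear_combination this
  set p : ℂ := (e q : ℂ) with hp
  have hpq : ∀ b, (e b : ℂ) = p → b = q := fun b hb => e.injective (Subtype.ext hb)
  have hp1 : ‖p‖ ≤ 1 := mem_closedBall_zero_iff.1 (e q).2
  rcases hp1.lt_or_eq with hlt | heq
  · -- interior point
    let r : ℂ → Metric.closedBall (0 : ℂ) 1 := fun z => ⟨((max 1 ‖z‖)⁻¹ : ℝ) • z, by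
      have : 0 < max 1 ‖z‖ := by positivity
      simp only [Metric.mem_closedBall, dist_zero_right, norm_smul, norm_inv, Real.norm_eq_abs,
        abs_of_pos this]
      rw [inv_mul_le_iff₀ this]; simp⟩
    have hr : Continuous r := by
      apply Continuous.subtype_mk
      have : Continuous fun z : ℂ => (max 1 ‖z‖)⁻¹ :=
        Continuous.inv₀ (by fun_prop) (fun z => by positivity)
      fun_prop
    have hr1 : ∀ z : Metric.closedBall (0 : ℂ) 1, r z = z := by
      intro z
      have : ‖(z : ℂ)‖ ≤ 1 := mem_closedBall_zero_iff.1 z.2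
      apply Subtype.ext
      simp [r, this]
    have hrp : ∀ z, (r z : ℂ) = p → z = p := by
      intro z hz
      rcases le_total ‖z‖ 1 with h | h
      · rw [← hz]; simp [r, h]
      · exfalso
        have h2 : ‖(r z : ℂ)‖ = 1 := by
          have : ‖z‖ ≠ 0 := by positivity
          simp [r, h, this]
        rw [hz] at h2; linarith
    -- logs of F
    have hφ : ∀ k, ∃ φ : ℂ → ℂ, Continuous φ ∧
        ∀ z, Complex.exp (φ z) = F k (e.symm (r (p + Complex.exp z))) := by
      intro k
      apply exp_log_lift_univ
      · have := hF k
        fun_prop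
      · intro z hz
        have h2 := hF0 k _ hz
        rw [Homeomorph.symm_apply_eq] at h2
        have := hrp _ (congrArg Subtype.val h2)
        simp [Complex.exp_ne_zero] at this
    choose φ hφc hφe using hφ
    -- logs of the paths
    have hw : ∀ j, ∃ w : I → ℂ, Continuous w ∧ ∀ s, Complex.exp (w s) = (e (P j s) : ℂ) - p := by
      intro j
      apply exp_log_lift (convex_Icc (0 : ℝ) 1) ⟨0, by simp⟩
      · have := hP j
        fun_prop
      · intro s hs
        exact hPq j s (hpq _ (sub_eq_zero.1 hs))
    choose w hwc hwe using hw
    have hww : ∀ j, ∃ u : I → ℂ, Continuous u ∧ (∀ s, Complex.exp (u s) = (e (P j s) : ℂ) - p) ∧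
        u 0 = w 0 0 := by
      intro j
      have h3 : Complex.exp (w 0 0 - w j 0) = 1 := by
        rw [Complex.exp_sub, hwe, hwe, h0 0 j, ← hwe, div_self (Complex.exp_ne_zero _)]
      refine ⟨fun s => w j s + (w 0 0 - w j 0), ?_, ?_, by ring⟩
      · have := hwc j
        fun_prop
      · intro s
        rw [Complex.exp_add, h3, mul_one, hwe]
    choose u huc hue hu0 using hww
    have hn : ∀ j, ∃ n : ℤ, u j 1 = u 0 1 + n * (2 * Real.pi * Complex.I) := by
      intro j
      rw [← Complex.exp_eq_exp_iff_exists_int, hue, hue, h1 j 0]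
    choose n hn using hn
    have hodd : ∀ i j, i ≠ j → ¬ Even (n j - n i) := by
      rintro i j hij ⟨l, hl⟩
      have hk : ∀ m, φ j (u m 1) - φ j (u 0 0) = (if m = j then -1 else 1) * (Real.pi * Complex.I) := by
        intro m
        rw [hu0 0, ← hu0 m]
        apply key j m (fun s => φ j (u m s)) ((hφc j).comp (huc m))
        intro s
        rw [hφe, hue, add_sub_cancel, hr1, Homeomorph.symm_apply_apply]
      have hd := exp_lift_unique (fun z => φ j (z + l * (2 * Real.pi * Complex.I))) (φ j)
        (by have := hφc j; fun_prop) (hφc j) (by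
          intro z
          rw [hφe, hφe, Complex.exp_add, Complex.exp_int_mul_two_pi_mul_I, mul_one])
      have hd2 : ∀ z, ∃ t : ℤ, φ j (z + l * (2 * Real.pi * Complex.I)) = φ j z + t * (2 * Real.pi * Complex.I) := by
        intro z
        rw [← Complex.exp_eq_exp_iff_exists_int, hφe, hφe, Complex.exp_add,
          Complex.exp_int_mul_two_pi_mul_I, mul_one]
      obtain ⟨t, ht⟩ := hd2 (u i 1)
      have hd3 := hd (u i 1 + l * (2 * Real.pi * Complex.I)) (u i 1)
      beta_reduce at hd3
      have hji : u j 1 = u i 1 + l * (2 * Real.pi * Complex.I) + l * (2 * Real.pi * Complex.I) := by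
        have hll : (n j : ℂ) - n i = l + l := by exact_mod_cast hl
        rw [hn j, hn i]
        linear_combination (2 * Real.pi * Complex.I) * hll
      have h5 := hk j
      have h6 := hk i
      rw [if_pos rfl] at h5
      rw [if_neg hij] at h6
      rw [hji] at h5
      have h7 : ((Real.pi : ℂ) * Complex.I) * (2 * t + 1) = 0 := by
        linear_combination (h5 - h6 - hd3) / 2 - ht
      have h8 : (2 * t + 1 : ℂ) = 0 := by
        rcases mul_eq_zero.1 h7 with h | h
        · exact absurd h hI
        · exact h
      have h9 : 2 * t + 1 = 0 := by exact_mod_cast h8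
      omega
    have a1 := hodd 0 1 (by decide)
    have a2 := hodd 1 2 (by decide)
    have a3 := hodd 0 2 (by decide)
    rw [Int.even_iff] at a1 a2 a3
    omega
  · -- boundary point
    have hconv : Convex ℝ (Metric.closedBall (0 : ℂ) 1 \ {p}) := by
      have hsc : StrictConvex ℝ (Metric.closedBall (0 : ℂ) 1) := strictConvex_closedBall ℝ 0 1
      intro x hx y hy a b ha hb hab
      refine ⟨hsc.convex hx.1 hy.1 ha hb hab, ?_⟩
      intro hxy
      have hxy : a • x + b • y = p := hxy
      rcases ha.eq_or_lt with rfl | ha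
      · obtain rfl : b = 1 := by linarith
        exact hy.2 (by simpa using hxy)
      rcases hb.eq_or_lt with rfl | hb
      · obtain rfl : a = 1 := by linarith
        exact hx.2 (by simpa using hxy)
      by_cases hne : x = y
      · subst hne
        rw [← add_smul, hab, one_smul] at hxy
        exact hx.2 hxy
      have := hsc hx.1 hy.1 hne ha hb hab
      rw [interior_closedBall _ one_ne_zero, mem_ball_zero_iff, hxy] at this
      linarith
    have hmem : ∀ j s, (e (P j s) : ℂ) ∈ Metric.closedBall (0 : ℂ) 1 \ {p} := fun j s =>
      ⟨(e (P j s)).2, fun h => hPq j s (hpq _ h)⟩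
    obtain ⟨φ, hφ, hφe⟩ := exp_log_lift hconv ⟨_, hmem 0 0⟩
      (fun z => F 0 (e.symm ⟨z, z.2.1⟩)) (by have := hF 0; fun_prop) (by
        intro z hz
        have h2 := hF0 0 _ hz
        rw [Homeomorph.symm_apply_eq] at h2
        exact z.2.2 (congrArg Subtype.val h2))
    have hk : ∀ m, φ ⟨_, hmem m 1⟩ - φ ⟨_, hmem m 0⟩ = (if m = 0 then -1 else 1) * (Real.pi * Complex.I) := by
      intro m
      apply key 0 m (fun s => φ ⟨_, hmem m s⟩) (by have := hP m; fun_prop)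
      intro s
      rw [hφe]
      simp
    have b0 := hk 0
    have b1 := hk 1
    simp only [h0 1 0, h1 1 0] at b1
    rw [b0] at b1
    simp only [if_true, one_ne_zero, if_false] at b1
    apply hI
    linear_combination -b1 / 2

open unitInterval in
theorem no_book_cube (a : Fin 4) (b : Fin 3 → Fin 4) (v : Fin 4 → ℝ)
    (hv : ∀ i, v i = 0 ∨ v i = 1) (hba : ∀ k, b k ≠ a) (hb : Function.Injective b)
    (hsurj : ∀ i, i ≠ a → ∃ k, b k = i) (U : Set (Fin 4 → ℝ))
    (hU : ∀ x, x ∈ U ↔ ∃ k : Fin 3, (∀ i, (i = a ∨ i = b k → 0 ≤ x i ∧ x i ≤ 1) ∧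
      (i ≠ a → i ≠ b k → x i = v i)))
    (hdisk : Nonempty (U ≃ₜ Disk2)) : False := by
  obtain ⟨e⟩ := hdisk
  let L : EuclideanSpace ℝ (Fin 2) ≃ₗᵢ[ℝ] ℂ := Complex.orthonormalBasisOneI.repr.symm
  let e2 : Disk2 ≃ₜ Metric.closedBall (0 : ℂ) 1 :=
    L.toHomeomorph.subtype (by
      intro x
      simp [Disk2])
  let q : U := ⟨fun i => if i = a then 1/2 else v i, by
    rw [hU]
    refine ⟨0, fun i => ⟨fun _ => ?_, fun h _ => by simp [h]⟩⟩
    split_ifs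
    · norm_num
    · rcases hv i with h | h <;> simp [h]⟩
  let P : Fin 3 → I → U := fun j s => ⟨fun i => if i = a then 1/2 - Real.cos (Real.pi * s) / 2
      else if i = b j then |v i - Real.sin (Real.pi * s) / 2| else v i, by
    rw [hU]
    refine ⟨j, fun i => ⟨fun _ => ?_, fun h h' => by simp [h, h']⟩⟩
    have h1 := Real.cos_le_one (Real.pi * s)
    have h2 := Real.neg_one_le_cos (Real.pi * s)
    have h3 : 0 ≤ Real.sin (Real.pi * s) := Real.sin_nonneg_of_nonneg_of_le_pi
      (mul_nonneg Real.pi_pos.le s.2.1) (mul_le_of_le_one_right Real.pi_pos.le s.2.2)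
    have h4 := Real.sin_le_one (Real.pi * s)
    split_ifs
    · constructor <;> linarith
    · refine ⟨abs_nonneg _, abs_le.2 ?_⟩
      rcases hv i with h | h <;> rw [h] <;> constructor <;> linarith
    · rcases hv i with h | h <;> simp [h]⟩
  let F : Fin 3 → U → ℂ := fun k x => ((x.1 a - 1/2 : ℝ) : ℂ) +
    ((∑ j, (if j = k then 1 else -1) * |x.1 (b j) - v (b j)| : ℝ) : ℂ) * Complex.I
  have hFk : ∀ k j s, F k (P j s) = -(1/2) * Complex.exp (
      (if j = k then -1 else 1) * (Real.pi * Complex.I) * ((s : ℝ) : ℂ)) := by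
    intro k j s
    have h3 : 0 ≤ Real.sin (Real.pi * s) := Real.sin_nonneg_of_nonneg_of_le_pi
      (mul_nonneg Real.pi_pos.le s.2.1) (mul_le_of_le_one_right Real.pi_pos.le s.2.2)
    have h4 := Real.sin_le_one (Real.pi * s)
    have hs : (∑ l, (if l = k then 1 else -1) * |(P j s).1 (b l) - v (b l)| : ℝ) =
        (if j = k then 1 else -1) * (Real.sin (Real.pi * s) / 2) := by
      rw [Finset.sum_eq_single j]
      · congr 1
        simp only [P, hba j, if_false, if_true]
        rcases hv (b j) with h | h <;> rw [h]
        · rw [zero_sub, abs_neg, sub_zero, abs_abs, abs_of_nonneg (by linarith)]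
        · rw [abs_of_nonneg (a := 1 - Real.sin (Real.pi * s) / 2) (by linarith), abs_sub_comm,
            abs_of_nonneg (by linarith)]
          ring
      · intro l _ hl
        simp [P, hba l, hb.ne hl]
      · simp
    have ha : (P j s).1 a = 1/2 - Real.cos (Real.pi * s) / 2 := by simp [P]
    simp only [F, hs, ha]
    have hx : ((if j = k then -1 else 1) * (Real.pi * Complex.I) * ((s : ℝ) : ℂ)) =
      (((if j = k then -1 else 1) * (Real.pi * s) : ℝ) : ℂ) * Complex.I := by
      split_ifs <;> push_cast <;> ring
    rw [hx, Complex.exp_mul_I, ← Complex.ofReal_cos, ← Complex.ofReal_sin]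
    split_ifs
    · rw [neg_one_mul, Real.cos_neg, Real.sin_neg]; push_cast; ring
    · rw [one_mul]; push_cast; ring
  have hF0 : ∀ k x, F k x = 0 → x = q := by
    intro k x hx
    have hre : x.1 a - 1/2 = 0 := by
      have := congrArg Complex.re hx
      simpa [F] using this
    have him : (∑ j, (if j = k then 1 else -1) * |x.1 (b j) - v (b j)| : ℝ) = 0 := by
      have := congrArg Complex.im hx
      simpa only [F, Complex.add_im, Complex.ofReal_im, Complex.re_ofReal_mul, Complex.im_ofReal_mul,
        Complex.I_im, mul_one, zero_add, Complex.zero_im] using this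
    obtain ⟨l, hl⟩ := (hU x.1).1 x.2
    have hz : ∀ m, m ≠ l → x.1 (b m) = v (b m) := fun m hm => (hl (b m)).2 (hba m) (hb.ne hm)
    rw [Finset.sum_eq_single l (fun m _ hm => by rw [hz m hm]; simp) (by simp)] at him
    have hll : x.1 (b l) = v (b l) := by
      rcases mul_eq_zero.1 him with h | h
      · split_ifs at h <;> norm_num at h
      · exact sub_eq_zero.1 (abs_eq_zero.1 h)
    apply Subtype.ext
    funext i
    by_cases hi : i = a
    · subst hi; simp [q]; linarith
    · obtain ⟨m, rfl⟩ := hsurj i hi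
      simp only [q, hi, if_false]
      by_cases hm : m = l
      · rw [hm, hll]
      · exact hz m hm
  have hPc : ∀ k, Continuous (P k) := by
    intro k
    apply Continuous.subtype_mk
    apply continuous_pi
    intro i
    split_ifs <;> fun_prop
  have hFc : ∀ k, Continuous (F k) := by
    intro k
    have hx : ∀ i, Continuous fun x : U => x.1 i := fun i =>
      (continuous_apply i).comp continuous_subtype_val
    have hsum : Continuous fun x : U =>
        (∑ j, (if j = k then 1 else -1) * |x.1 (b j) - v (b j)| : ℝ) :=
      continuous_finsetSum _ fun j _ =>
        continuous_const.mul (((hx (b j)).sub continuous_const).abs)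
    exact (Complex.continuous_ofReal.comp ((hx a).sub continuous_const)).add
      ((Complex.continuous_ofReal.comp hsum).mul continuous_const)
  have hFq : F 0 q = 0 := by simp [F, q, hba]
  refine no_book_aux (e.trans e2) q P hPc ?_ ?_ ?_ F hFc hF0 hFk
  · intro k s h
    have := hFk 0 k s
    rw [h, hFq] at this
    simp [Complex.exp_ne_zero] at this
  · intro k l
    apply Subtype.ext
    funext i
    rcases hv i with h | h <;> simp [P, h]
  · intro k l
    apply Subtype.ext
    funext i
    rcases hv i with h | h <;> simp [P, h]
/-- The closed interval coded by `0` (the point 0), `1` (the point 1), `2` (the unit interval). -/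
def ival (c : Fin 3) : Set ℝ := if c = 2 then Set.Icc 0 1 else if c = 1 then {1} else {0}

/-- The face of the cube with a given code. -/
def toFace (c : Fin 4 → Fin 3) : Set (Fin 4 → ℝ) := Set.pi Set.univ fun i => ival (c i)

theorem ival_nonempty (c : Fin 3) : (ival c).Nonempty := by
  fin_cases c <;> simp [ival]

theorem ival_inter (c d : Fin 3) : (ival c ∩ ival d).Nonempty ↔ (c = 2 ∨ d = 2 ∨ c = d) := by
  fin_cases c <;> fin_cases d <;> simp [ival]

theorem ival_inter_eq (c d : Fin 3) (h : c = 2 ∨ d = 2 ∨ c = d) :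
    ival c ∩ ival d = ival (if c = 2 then d else c) := by
  fin_cases c <;> fin_cases d <;> simp [ival] at h ⊢

theorem ival_inj {c d : Fin 3} (h : ival c = ival d) : c = d := by
  have h0 : (0 : ℝ) ∈ ival c ↔ (0 : ℝ) ∈ ival d := by rw [h]
  have h1 : (1 : ℝ) ∈ ival c ↔ (1 : ℝ) ∈ ival d := by rw [h]
  fin_cases c <;> fin_cases d <;> simp [ival] at h0 h1 ⊢

theorem toFace_nonempty (c) : (toFace c).Nonempty :=
  Set.univ_pi_nonempty_iff.2 fun i => ival_nonempty (c i)

theorem pi_inj {s t : Fin 4 → Set ℝ} (hs : ∀ i, (s i).Nonempty)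
    (h : Set.pi Set.univ s = Set.pi Set.univ t) : s = t := by
  have hne : (Set.pi Set.univ s).Nonempty := Set.univ_pi_nonempty_iff.2 hs
  funext i
  rw [← Set.eval_image_univ_pi hne, h, Set.eval_image_univ_pi (h ▸ hne)]

theorem toFace_inj : Function.Injective toFace := by
  intro c d h
  have := pi_inj (fun i => ival_nonempty (c i)) h
  funext i
  exact ival_inj (congrFun this i)

theorem sFace_eq (v : Fin 4 → ℤ) (S : Finset (Fin 4)) : sFace 4 1 v S =
    Set.pi Set.univ fun i => if i ∈ S then Set.Icc (v i : ℝ) (v i + 1) else {(v i : ℝ)} := by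
  ext x
  simp only [sFace, Set.mem_ofPred_eq, Set.mem_pi, Set.mem_univ, true_imp_iff, Nat.cast_one, div_one]
  refine forall_congr' fun i => ?_
  by_cases h : i ∈ S <;> simp [h]

theorem toFace_eq_sFace (c : Fin 4 → Fin 3) : toFace c =
    sFace 4 1 (fun i => if c i = 1 then 1 else 0) (Finset.univ.filter fun i => c i = 2) := by
  rw [sFace_eq]
  unfold toFace
  congr 1
  funext i
  simp only [Finset.mem_filter, Finset.mem_univ, true_and]
  generalize c i = d
  fin_cases d <;> simp [ival]

/-- number of free coordinates -/
def dimc (c : Fin 4 → Fin 3) : ℕ := (Finset.univ.filter fun i => c i = 2).card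

theorem sFace_free {v : Fin 4 → ℤ} {S : Finset (Fin 4)} {c : Fin 4 → Fin 3}
    (h : toFace c = sFace 4 1 v S) : S.card = dimc c := by
  rw [sFace_eq] at h
  have := pi_inj (fun i => ival_nonempty (c i)) h
  unfold dimc
  congr 1
  ext i
  have hi := congrFun this i
  simp only [Finset.mem_filter, Finset.mem_univ, true_and]
  generalize c i = d at hi ⊢
  by_cases hS : i ∈ S
  · simp only [hS, if_true, true_iff] at hi ⊢
    have h1 : (v i : ℝ) ∈ ival d := by rw [hi]; simp
    have h2 : (v i : ℝ) + 1 ∈ ival d := by rw [hi]; simp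
    by_contra hd
    simp only [ival, hd, if_false] at h1 h2
    split_ifs at h1 h2 <;> simp only [Set.mem_singleton_iff] at h1 h2 <;> linarith
  · simp only [hS, if_false, false_iff] at hi ⊢
    rintro rfl
    have h1 : (0 : ℝ) ∈ ival 2 := by simp [ival]
    have h2 : (1 : ℝ) ∈ ival 2 := by simp [ival]
    rw [hi, Set.mem_singleton_iff] at h1 h2
    linarith

theorem toFace_subset (c d : Fin 4 → Fin 3) (h : ∀ i, d i = 2 ∨ c i = d i) :
    toFace c ⊆ toFace d := by
  apply Set.pi_mono
  intro i _
  have := h i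
  generalize c i = a at this ⊢
  generalize d i = b at this ⊢
  fin_cases a <;> fin_cases b <;> simp [ival] at this ⊢

theorem Q4_eq : Q4 = toFace fun _ => 2 := by
  rw [toFace_eq_sFace]; unfold Q4; congr 1

theorem toFace_mem (c : Fin 4 → Fin 3) :
    toFace c ∈ sFaces 4 1 (dimc c) ∧ toFace c ⊆ Q4 := by
  refine ⟨⟨_, _, rfl, toFace_eq_sFace c⟩, ?_⟩
  rw [Q4_eq]
  exact toFace_subset _ _ fun i => Or.inl rfl

theorem mem_twoFaces (G : Set (Fin 4 → ℝ)) :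
    G ∈ twoFacesQ4 ↔ ∃ c, dimc c = 2 ∧ toFace c = G := by
  constructor
  · rintro ⟨⟨v, S, hS, rfl⟩, hsub⟩
    suffices ∃ c, toFace c = sFace 4 1 v S by
      obtain ⟨c, hc⟩ := this
      exact ⟨c, by rw [← sFace_free hc, hS], hc⟩
    rw [Q4_eq, sFace_eq, toFace, Set.univ_pi_subset_univ_pi_iff] at hsub
    rw [sFace_eq]
    have hsub : ∀ i, (if i ∈ S then Set.Icc (v i : ℝ) (v i + 1) else {(v i : ℝ)}) ⊆ ival 2 := by
      rcases hsub with h | ⟨i, hi⟩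
      · exact h
      · exfalso
        by_cases hS : i ∈ S
        · rw [if_pos hS] at hi
          have : (v i : ℝ) ∈ (∅ : Set ℝ) := by rw [← hi]; simp
          exact this
        · simp [hS] at hi
    refine ⟨fun i => if i ∈ S then 2 else if v i = 0 then 0 else 1, ?_⟩
    unfold toFace
    congr 1
    funext i
    have hi := hsub i
    by_cases hS : i ∈ S
    · simp only [hS, if_true] at hi ⊢
      have h1 : (v i : ℝ) ∈ ival 2 := hi (by simp)
      have h2 : (v i : ℝ) + 1 ∈ ival 2 := hi (by simp)
      simp only [ival, if_true, Set.mem_Icc] at h1 h2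
      have : (v i : ℝ) = 0 := by linarith
      simp [this, ival]
    · simp only [hS, if_false] at hi ⊢
      have h1 : (v i : ℝ) ∈ ival 2 := hi (by simp)
      simp only [ival, if_true, Set.mem_Icc] at h1
      have a1 : 0 ≤ v i := by exact_mod_cast h1.1
      have a2 : v i ≤ 1 := by exact_mod_cast h1.2
      by_cases h0 : v i = 0
      · simp [h0, ival]
      · have : v i = 1 := by omega
        simp [this, ival]
  · rintro ⟨c, hc, rfl⟩
    have := toFace_mem c
    rw [hc] at this
    exact this

/-- two faces meet -/
def meets (c d : Fin 4 → Fin 3) : Bool :=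
  (List.finRange 4).all fun i => c i == 2 || d i == 2 || c i == d i

theorem meets_iff (c d) : meets c d = true ↔ ∀ i, (c i = 2 ∨ d i = 2 ∨ c i = d i) := by
  simp [meets, or_assoc]

theorem inter_nonempty_iff (c d) : (toFace c ∩ toFace d).Nonempty ↔ meets c d = true := by
  rw [meets_iff, toFace, toFace, ← Set.pi_inter_distrib, Set.univ_pi_nonempty_iff]
  exact forall_congr' fun i => ival_inter _ _

/-- two 2-faces meet along an edge -/
def nbr (c d : Fin 4 → Fin 3) : Bool :=
  meets c d && ((List.finRange 4).filter fun i => c i == 2 && d i == 2).length == 1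

theorem nbr_of (c d) (h : Neighboring (toFace c) (toFace d)) : nbr c d = true := by
  obtain ⟨-, v, S, hS, hE⟩ := h
  have hne : (toFace c ∩ toFace d).Nonempty := by
    rw [hE, sFace_eq]
    apply Set.univ_pi_nonempty_iff.2
    intro i
    split_ifs <;> simp
  rw [inter_nonempty_iff] at hne
  have hm := (meets_iff c d).1 hne
  have : toFace (fun i => if c i = 2 then d i else c i) = sFace 4 1 v S := by
    rw [← hE, toFace, toFace, toFace, ← Set.pi_inter_distrib]
    congr 1
    funext i
    exact (ival_inter_eq _ _ (hm i)).symm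
  have hd := sFace_free this
  rw [hS] at hd
  simp only [nbr, hne, Bool.true_and, beq_iff_eq]
  rw [hd, dimc, ← List.toFinset_card_of_nodup ((List.nodup_finRange 4).filter _)]
  congr 1
  ext i
  by_cases h : c i = 2 <;> simp [h]

/-- codes of all 2-faces -/
def codes : List (Fin 4 → Fin 3) :=
  [![2,2,0,0], ![2,2,0,1], ![2,2,1,0], ![2,2,1,1],
   ![2,0,2,0], ![2,0,2,1], ![2,1,2,0], ![2,1,2,1],
   ![2,0,0,2], ![2,0,1,2], ![2,1,0,2], ![2,1,1,2],
   ![0,2,2,0], ![0,2,2,1], ![1,2,2,0], ![1,2,2,1],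
   ![0,2,0,2], ![0,2,1,2], ![1,2,0,2], ![1,2,1,2],
   ![0,0,2,2], ![0,1,2,2], ![1,0,2,2], ![1,1,2,2]]

/-- codes of all 3-faces -/
def codes3 : List (Fin 4 → Fin 3) :=
  [![0,2,2,2], ![1,2,2,2], ![2,0,2,2], ![2,1,2,2], ![2,2,0,2], ![2,2,1,2], ![2,2,2,0], ![2,2,2,1]]

theorem codes_nodup : codes.Nodup := by decide +kernel

theorem mem_codes : ∀ c, c ∈ codes ↔ dimc c = 2 := by unfold dimc; decide +kernel

theorem dim_codes3 : ∀ c ∈ codes3, dimc c = 3 := by unfold dimc; decide +kernel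

/-- containment of faces -/
def subc (c d : Fin 4 → Fin 3) : Bool := (List.finRange 4).all fun i => d i == 2 || c i == d i

/-- three squares share an edge -/
def badT (c₁ c₂ c₃ : Fin 4 → Fin 3) (a : Fin 4) : Bool :=
  c₁ a == 2 && c₂ a == 2 && c₃ a == 2

/-- meets one of three -/
def meets3 (c₁ c₂ c₃ c : Fin 4 → Fin 3) : Bool := meets c c₁ || meets c c₂ || meets c c₃

/-- the combinatorial conclusion -/
def goodT (c₁ c₂ c₃ : Fin 4 → Fin 3) : Bool :=
  ((codes.filter fun c => c != c₁ && c != c₂ && c != c₃ && meets3 c₁ c₂ c₃ c).length == 15) &&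
  ((codes.filter fun c => !meets3 c₁ c₂ c₃ c).length == 6) &&
  codes3.any fun C => codes.all fun c => meets3 c₁ c₂ c₃ c || subc c C

theorem main_comb : (codes.all fun c₁ => codes.all fun c₂ => !nbr c₁ c₂ || codes.all fun c₃ =>
    !nbr c₁ c₃ || !nbr c₂ c₃ || (List.finRange 4).any (badT c₁ c₂ c₃) || goodT c₁ c₂ c₃) = true := by
  decide +kernel

/-- book structure of three squares around a common edge, as a Boolean -/
def bookB (c : Fin 3 → Fin 4 → Fin 3) (a : Fin 4) : Bool :=
  decide (∀ k, ∃ b, b ≠ a ∧ c k b = 2 ∧ ∀ i, i ≠ a → c k i = 2 → i = b) &&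
  decide (∀ i, i ≠ a → ∃ k, c k i = 2) &&
  decide (∀ i, i ≠ a → ∀ k l, c k i = 2 → c l i = 2 → k = l) &&
  decide (∀ i, ∃ v : Fin 3, v ≠ 2 ∧ ∀ k, c k i = 2 ∨ c k i = v)

theorem bad_comb_all : (codes.all fun c₁ => codes.all fun c₂ => !nbr c₁ c₂ || codes.all fun c₃ =>
    !nbr c₁ c₃ || !nbr c₂ c₃ || (List.finRange 4).all fun a =>
      !badT c₁ c₂ c₃ a || bookB ![c₁, c₂, c₃] a) = true := by
  decide +kernel

theorem bad_false (c₁ c₂ c₃ : Fin 4 → Fin 3) (h₁ : c₁ ∈ codes) (h₂ : c₂ ∈ codes) (h₃ : c₃ ∈ codes)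
    (h₁₂ : nbr c₁ c₂ = true) (h₁₃ : nbr c₁ c₃ = true) (h₂₃ : nbr c₂ c₃ = true) (a : Fin 4)
    (ha : badT c₁ c₂ c₃ a = true)
    (hdisk : Nonempty (↥(toFace c₁ ∪ toFace c₂ ∪ toFace c₃) ≃ₜ ↥Disk2)) : False := by
  have hm := List.all_eq_true.1 bad_comb_all c₁ h₁
  have hm := List.all_eq_true.1 hm c₂ h₂
  rw [h₁₂, Bool.not_true, Bool.false_or] at hm
  have hm := List.all_eq_true.1 hm c₃ h₃
  rw [h₁₃, h₂₃, Bool.not_true, Bool.false_or, Bool.false_or] at hm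
  have hm := List.all_eq_true.1 hm a (List.mem_finRange a)
  rw [ha, Bool.not_true, Bool.false_or] at hm
  simp only [bookB, Bool.and_eq_true, decide_eq_true_eq] at hm
  obtain ⟨⟨⟨hb, hs⟩, hu⟩, hv⟩ := hm
  have hka : ∀ k, (![c₁, c₂, c₃] k) a = 2 := by
    simp only [badT, Bool.and_eq_true, beq_iff_eq] at ha
    intro k
    fin_cases k
    · exact ha.1.1
    · exact ha.1.2
    · exact ha.2
  have hU : ∀ x, x ∈ toFace c₁ ∪ toFace c₂ ∪ toFace c₃ ↔ ∃ k, x ∈ toFace (![c₁, c₂, c₃] k) := by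
    intro x
    simp [Fin.exists_fin_succ, or_assoc]
  generalize ![c₁, c₂, c₃] = c at *
  choose b hba hb2 hbu using hb
  choose v hv2 hv using hv
  refine no_book_cube a b (fun i => if v i = 1 then 1 else 0) ?_ hba ?_ ?_ _ ?_ hdisk
  · intro i
    split_ifs <;> simp
  · intro k l hkl
    exact hu (b k) (hba k) k l (hb2 k) (by rw [hkl]; exact hb2 l)
  · intro i hi
    obtain ⟨k, hk⟩ := hs i hi
    exact ⟨k, (hbu k i hi hk).symm⟩
  · intro x
    rw [hU]
    refine exists_congr fun k => ?_
    simp only [toFace, Set.mem_pi, Set.mem_univ, true_imp_iff]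
    refine forall_congr' fun i => ?_
    by_cases hi : i = a ∨ i = b k
    · have h2 : c k i = 2 := by
        rcases hi with rfl | rfl
        · exact hka k
        · exact hb2 k
      rw [h2]
      simp only [hi, true_imp_iff, ival, if_true, Set.mem_Icc]
      refine ⟨fun h => ⟨h, fun h1 h2 => ?_⟩, fun h => h.1⟩
      rcases hi with h | h
      · exact absurd h h1
      · exact absurd h h2
    · simp only [hi, false_imp_iff, true_and]
      rw [not_or] at hi
      have h2 : c k i ≠ 2 := fun h => hi.2 (hbu k i hi.1 h)
      have h3 : c k i = v i := (hv i k).resolve_left h2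
      have h4 := hv2 i
      simp only [ival, h4, if_false, h3, hi.1, hi.2, not_false_eq_true, ne_eq, true_imp_iff]
      split_ifs <;> simp

theorem ncard_faces (p : Set (Fin 4 → ℝ) → Prop) (f : (Fin 4 → Fin 3) → Bool)
    (h : ∀ c, p (toFace c) ↔ f c = true) :
    {G ∈ twoFacesQ4 | p G}.ncard = (codes.filter f).length := by
  have : {G ∈ twoFacesQ4 | p G} = Set.image toFace ((codes.filter f).toFinset : Set (Fin 4 → Fin 3)) := by
    ext G
    simp only [Set.mem_image, List.coe_toFinset, List.mem_filter]
    constructor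
    · rintro ⟨hG, hp⟩
      obtain ⟨c, hc, rfl⟩ := (mem_twoFaces G).1 hG
      exact ⟨c, ⟨(mem_codes c).2 hc, (h c).1 hp⟩, rfl⟩
    · rintro ⟨c, ⟨hc, hf⟩, rfl⟩
      exact ⟨(mem_twoFaces _).2 ⟨c, (mem_codes c).1 hc, rfl⟩, (h c).2 hf⟩
  rw [this, Set.ncard_image_of_injective _ toFace_inj, Set.ncard_coe_finset,
    List.toFinset_card_of_nodup (codes_nodup.filter _)]

theorem meets3_iff (c₁ c₂ c₃ c : Fin 4 → Fin 3) :
    (toFace c ∩ (toFace c₁ ∪ toFace c₂ ∪ toFace c₃)).Nonempty ↔ meets3 c₁ c₂ c₃ c = true := by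
  rw [Set.inter_union_distrib_left, Set.inter_union_distrib_left, Set.union_nonempty,
    Set.union_nonempty, inter_nonempty_iff, inter_nonempty_iff, inter_nonempty_iff]
  simp [meets3]

/-- if `A²` is the union of three pairwise-neighboring 2-faces of the 4-cube
(forming a disk), then exactly fifteen other 2-faces of the 4-cube meet `A²`, and the six
2-faces disjoint from `A²` all lie in a single 3-face of the 4-cube. -/
theorem three_squares_complement (A₁ A₂ A₃ : Set (Fin 4 → ℝ))
    (h₁ : A₁ ∈ twoFacesQ4) (h₂ : A₂ ∈ twoFacesQ4) (h₃ : A₃ ∈ twoFacesQ4)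
    (h₁₂ : Neighboring A₁ A₂) (h₂₃ : Neighboring A₂ A₃) (h₁₃ : Neighboring A₁ A₃)
    (hdisk : Nonempty (↥(A₁ ∪ A₂ ∪ A₃) ≃ₜ ↥Disk2)) :
    {G ∈ twoFacesQ4 | G ≠ A₁ ∧ G ≠ A₂ ∧ G ≠ A₃ ∧ (G ∩ (A₁ ∪ A₂ ∪ A₃)).Nonempty}.ncard = 15 ∧
    {G ∈ twoFacesQ4 | G ∩ (A₁ ∪ A₂ ∪ A₃) = ∅}.ncard = 6 ∧
    ∃ C ∈ threeFacesQ4, ∀ G ∈ twoFacesQ4, G ∩ (A₁ ∪ A₂ ∪ A₃) = ∅ → G ⊆ C := by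
  obtain ⟨c₁, hc₁, rfl⟩ := (mem_twoFaces _).1 h₁
  obtain ⟨c₂, hc₂, rfl⟩ := (mem_twoFaces _).1 h₂
  obtain ⟨c₃, hc₃, rfl⟩ := (mem_twoFaces _).1 h₃
  rw [← mem_codes] at hc₁ hc₂ hc₃
  have n₁₂ := nbr_of _ _ h₁₂
  have n₁₃ := nbr_of _ _ h₁₃
  have n₂₃ := nbr_of _ _ h₂₃
  have hm := List.all_eq_true.1 main_comb c₁ hc₁
  have hm := List.all_eq_true.1 hm c₂ hc₂
  rw [n₁₂, Bool.not_true, Bool.false_or] at hm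
  have hm := List.all_eq_true.1 hm c₃ hc₃
  rw [n₁₃, n₂₃, Bool.not_true, Bool.false_or, Bool.false_or, Bool.or_eq_true] at hm
  rcases hm with hbad | hgood
  · obtain ⟨a, -, ha⟩ := List.any_eq_true.1 hbad
    exact (bad_false c₁ c₂ c₃ hc₁ hc₂ hc₃ n₁₂ n₁₃ n₂₃ a ha hdisk).elim
  have hempty : ∀ c, toFace c ∩ (toFace c₁ ∪ toFace c₂ ∪ toFace c₃) = ∅ ↔
      (!meets3 c₁ c₂ c₃ c) = true := by
    intro c
    rw [← Set.not_nonempty_iff_eq_empty, meets3_iff]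
    simp
  simp only [goodT, Bool.and_eq_true, beq_iff_eq] at hgood
  obtain ⟨⟨h15, h6⟩, hC⟩ := hgood
  refine ⟨?_, ?_, ?_⟩
  · rw [← h15]
    apply ncard_faces (fun G => G ≠ toFace c₁ ∧ G ≠ toFace c₂ ∧ G ≠ toFace c₃ ∧
      (G ∩ (toFace c₁ ∪ toFace c₂ ∪ toFace c₃)).Nonempty)
    intro c
    rw [meets3_iff, toFace_inj.ne_iff, toFace_inj.ne_iff, toFace_inj.ne_iff]
    simp [and_assoc]
  · rw [← h6]
    exact ncard_faces (fun G => G ∩ (toFace c₁ ∪ toFace c₂ ∪ toFace c₃) = ∅) _ hempty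
  · obtain ⟨C, hC3, hC⟩ := List.any_eq_true.1 hC
    refine ⟨toFace C, ?_, ?_⟩
    · have := toFace_mem C
      rw [dim_codes3 C hC3] at this
      exact this
    · intro G hG hGe
      obtain ⟨c, hc, rfl⟩ := (mem_twoFaces G).1 hG
      have h4 := List.all_eq_true.1 hC c ((mem_codes c).2 hc)
      have h5 := (hempty c).1 hGe
      apply toFace_subset
      simp only [Bool.not_eq_true'] at h5
      rw [h5, Bool.false_or] at h4
      simpa [subc] using h4
end
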